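/- Let k ≥ 1, n ≥ 2k+1, and m = n − 2k − 1. Let x = y = m, T j = m for all j ∈ Fin m (T = N^m E^m), and B j = j for all j ∈ Fin m (B = (EN)^m). Then for every sequence (d_1,…,d_{n−k−1}) of natural numbers, the number of k-triangulations of the convex n-gon in which, for every 1 ≤ i ≤ n−k−1, vertex i is joined by nontrivial diagonals to exactly d_i of the vertices i+1,…,n, equals the number of tuples P ∈ P^k(T,B) such that h_{i−1}(P) = d_i for 1 ≤ i ≤ k+1 and u_{i−k−1}(P) + d_i + k + i = n for k+1 < i ≤ n−k−1. -/

import Mathlib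

/-- A path `P` lies in `P(T,B)`: it is weakly increasing (monotone) and lies
weakly between the boundaries `B` and `T`. -/
def InP {x y : ℕ} (T B P : Fin x → Fin (y+1)) : Prop :=
  Monotone P ∧ ∀ j, B j ≤ P j ∧ P j ≤ T j

/-- A `k`-tuple of paths lies in `P^k(T,B)`: every path lies in `P(T,B)` and
each path lies weakly above the next one. -/
def InPk {x y k : ℕ} (T B : Fin x → Fin (y+1)) (P : Fin k → Fin x → Fin (y+1)) : Prop :=
  (∀ i, InP T B (P i)) ∧
  ∀ (i : Fin k) (hi : (i : ℕ) + 1 < k) (j : Fin x), P ⟨(i : ℕ) + 1, hi⟩ j ≤ P i j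

/-- The extended tuple, with the conventions `P_0 = T` and `P_{k+1} = B`. -/
def extP {x y k : ℕ} (T B : Fin x → Fin (y+1)) (P : Fin k → Fin x → Fin (y+1))
    (i : Fin (k+2)) : Fin x → Fin (y+1) :=
  if h0 : (i : ℕ) = 0 then T
  else if hk1 : (i : ℕ) = k + 1 then B
  else P ⟨(i : ℕ) - 1, by have := i.isLt; omega⟩

/-- `hstat T B P i` is the number of east steps shared by `P_i` and `P_{i+1}`. -/
noncomputable def hstat {x y k : ℕ} (T B : Fin x → Fin (y+1))
    (P : Fin k → Fin x → Fin (y+1)) (i : Fin (k+1)) : ℕ :=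
  Nat.card {j : Fin x // extP T B P i.castSucc j = extP T B P i.succ j}

/-- `ustat T B P s` (for `s : Fin (y-1)` representing `s+1 ∈ {1,…,y-1}`) is the
number of east steps at height `y-(s+1)` lying strictly between `T` and `B`
that are used by none of the paths of `P`. -/
noncomputable def ustat {x y k : ℕ} (T B : Fin x → Fin (y+1))
    (P : Fin k → Fin x → Fin (y+1)) (s : Fin (y-1)) : ℕ :=
  Nat.card {j : Fin x // (B j : ℕ) < y - ((s : ℕ) + 1) ∧ y - ((s : ℕ) + 1) < (T j : ℕ) ∧
      ∀ i : Fin k, (P i j : ℕ) ≠ y - ((s : ℕ) + 1)}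

/-- The cyclic distance between two vertices of a convex `n`-gon. -/
def cdist (n : ℕ) (a b : Fin n) : ℕ :=
  min (max (a : ℕ) (b : ℕ) - min (a : ℕ) (b : ℕ))
      (n - (max (a : ℕ) (b : ℕ) - min (a : ℕ) (b : ℕ)))

/-- Two diagonals (stored as pairs with first endpoint smaller) cross. -/
def Crosses {n : ℕ} (p q : Fin n × Fin n) : Prop :=
  (p.1 < q.1 ∧ q.1 < p.2 ∧ p.2 < q.2) ∨ (q.1 < p.1 ∧ p.1 < q.2 ∧ q.2 < p.2)

/-- A family of diagonals of the convex `n`-gon (each stored as a pair `(a,b)`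
with `a < b` and cyclic distance at least 2) with no `k+1` pairwise crossing
members. -/
def ValidFam (n k : ℕ) (D : Set (Fin n × Fin n)) : Prop :=
  (∀ p ∈ D, p.1 < p.2 ∧ 2 ≤ cdist n p.1 p.2) ∧
  ¬ ∃ f : Fin (k+1) → Fin n × Fin n, Function.Injective f ∧ (∀ i, f i ∈ D) ∧
      ∀ i j, i ≠ j → Crosses (f i) (f j)

/-- A `k`-triangulation of the convex `n`-gon: a maximal set of diagonals with
no `k+1` pairwise crossing diagonals. -/
def IsKTri (n k : ℕ) (D : Set (Fin n × Fin n)) : Prop :=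
  ValidFam n k D ∧ ∀ D' : Set (Fin n × Fin n), D ⊆ D' → ValidFam n k D' → D' = D

/-- The number of nontrivial diagonals of `D` joining the vertex `v` to a vertex
larger than `v`. -/
noncomputable def triDeg (n k : ℕ) (D : Set (Fin n × Fin n)) (v : Fin n) : ℕ :=
  Nat.card {p : Fin n × Fin n // p ∈ D ∧ p.1 = v ∧ k < cdist n p.1 p.2}

section ktOps
variable {K : Type*} [Field K]

def ktsw {A : Type*} (i : ℕ) (x : ℕ → A) : ℕ → A := fun b => x (Equiv.swap i (i+1) b)

theorem ktsw_left {A : Type*} (i : ℕ) (x : ℕ → A) : ktsw i x i = x (i+1) := by simp [ktsw]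
theorem ktsw_right {A : Type*} (i : ℕ) (x : ℕ → A) : ktsw i x (i+1) = x i := by simp [ktsw]
theorem ktsw_ne {A : Type*} {i b : ℕ} (x : ℕ → A) (h1 : b ≠ i) (h2 : b ≠ i+1) :
    ktsw i x b = x b := by simp [ktsw, Equiv.swap_apply_of_ne_of_ne h1 h2]
theorem ktsw_sw {A : Type*} (i : ℕ) (x : ℕ → A) : ktsw i (ktsw i x) = x := by
  funext b; simp [ktsw]
theorem ktsw_inj {A : Type*} {i : ℕ} {x : ℕ → A} (h : Function.Injective x) :
    Function.Injective (ktsw i x) := h.comp (Equiv.swap i (i+1)).injective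
theorem ktsw_comm {A : Type*} {i j : ℕ} (x : ℕ → A) (h : j + 2 ≤ i) :
    ktsw j (ktsw i x) = ktsw i (ktsw j x) := by
  funext b
  simp only [ktsw, Equiv.swap_apply_def]
  congr 1
  split_ifs <;> omega

def ktdd (i : ℕ) (φ : (ℕ → K) → K) : (ℕ → K) → K :=
  fun x => (φ x - φ (ktsw i x)) / (x i - x (i+1))
def ktpp (i : ℕ) (φ : (ℕ → K) → K) : (ℕ → K) → K :=
  fun x => (x i * φ x - x (i+1) * φ (ktsw i x)) / (x i - x (i+1))
def ktDdC : ℕ → ((ℕ → K) → K) → (ℕ → K) → K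
  | 0, φ => φ
  | j+1, φ => ktdd j (ktDdC j φ)
def ktPiC : ℕ → ((ℕ → K) → K) → (ℕ → K) → K
  | 0, φ => φ
  | j+1, φ => ktpp j (ktPiC j φ)

def ktInv (i : ℕ) (φ : (ℕ → K) → K) : Prop :=
  ∀ x, Function.Injective x → φ (ktsw i x) = φ x

theorem kt_sub_ne {x : ℕ → K} (h : Function.Injective x) (i : ℕ) : x i - x (i+1) ≠ 0 := by
  intro h0
  have := h (sub_eq_zero.mp h0)
  omega

theorem ktInv_DdC {φ : (ℕ → K) → K} {i : ℕ} (hφ : ktInv i φ) :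
    ∀ j, j + 1 ≤ i → ktInv i (ktDdC j φ)
  | 0, _ => hφ
  | j+1, hj => by
    intro x hx
    have ih := ktInv_DdC hφ j (by omega)
    simp only [ktDdC, ktdd]
    rw [ktsw_comm x (by omega : j + 2 ≤ i), ih x hx, ih _ (ktsw_inj hx),
      ktsw_ne x (by omega) (by omega), ktsw_ne x (by omega) (by omega)]

theorem kt_rec {f : (ℕ → K) → K} {k : ℕ} (hf : ∀ i, 1 ≤ i → i < k → ktInv i f) (a : ℕ) :
    ∀ j, j < k → ∀ x, Function.Injective x →
      ktDdC (j+1) (fun x => x 0 ^ (a+1) * f x) x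
        = x (j+1) * ktDdC (j+1) (fun x => x 0 ^ a * f x) x + ktDdC j (fun x => x 0 ^ a * f x) x
  | 0, _, x, hx => by
    have h := kt_sub_ne hx 0
    simp only [ktDdC, ktdd, ktsw_left]
    simp only [zero_add] at h ⊢
    field_simp
    ring
  | j+1, hj, x, hx => by
    have h := kt_sub_ne hx (j+1)
    have ih := kt_rec hf a j (by omega)
    have hb : ktInv (j+1) (fun x => x 0 ^ a * f x) := by
      intro y hy
      simp only
      rw [hf (j+1) (by omega) hj y hy, ktsw_ne y (by omega) (by omega)]
    have hi := ktInv_DdC hb j (by omega) x hx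
    have e1 := ih x hx
    have e2 := ih _ (ktsw_inj (i := j+1) hx)
    rw [ktsw_left, hi] at e2
    have e3 : ktDdC (j+1+1) (fun x => x 0 ^ a * f x) x
      = (ktDdC (j+1) (fun x => x 0 ^ a * f x) x
        - ktDdC (j+1) (fun x => x 0 ^ a * f x) (ktsw (j+1) x)) / (x (j+1) - x (j+1+1)) := rfl
    rw [e3, ktDdC, ktdd, e1, e2]
    rw [div_eq_iff h, add_mul, mul_assoc, div_mul_cancel₀ _ h]
    ring

theorem kt_conv {f : (ℕ → K) → K} {k : ℕ} (hf : ∀ i, 1 ≤ i → i < k → ktInv i f) (a : ℕ) :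
    ∀ j, j ≤ k → ∀ x, Function.Injective x →
      ktPiC j (fun x => x 0 ^ a * f x) x = ktDdC j (fun x => x 0 ^ (a+j) * f x) x
  | 0, _, x, hx => by simp [ktPiC, ktDdC]
  | j+1, hj, x, hx => by
    have h := kt_sub_ne hx j
    have ih := kt_conv hf a j (by omega)
    rw [← add_assoc, kt_rec hf (a+j) j (by omega) x hx]
    rw [ktPiC, ktpp, ih x hx, ih _ (ktsw_inj hx), ktDdC, ktdd]
    rw [div_eq_iff h, add_mul, mul_assoc, div_mul_cancel₀ _ h]
    ring

end ktOps

section ktLocal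
variable {K : Type*} [Field K]

def kttw (t : ℕ → K) (x : K) (a h : ℕ) : K :=
  if a = h then 1 else if a < h then x * ∏ s ∈ Finset.Ioo a h, t s else 0

def ktwt (t : ℕ → K) (p h : ℕ → ℕ) (x y : K) (c a : ℕ) : K :=
  kttw t x (p c) a * kttw t y a (h c)

def ktSS (w : ℕ → ℕ → K) (H : ℕ) : ℕ → ℕ → K
  | 0, _ => 1
  | N+1, b => ∑ a ∈ Finset.Icc b H, w N a * ktSS w H N a

theorem kttw_self (t : ℕ → K) (x : K) (a : ℕ) : kttw t x a a = 1 := by simp [kttw]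
theorem kttw_lt (t : ℕ → K) (x : K) {a h : ℕ} (l : a < h) :
    kttw t x a h = x * ∏ s ∈ Finset.Ioo a h, t s := by simp [kttw, l, l.ne]
theorem kttw_gt (t : ℕ → K) (x : K) {a h : ℕ} (l : h < a) :
    kttw t x a h = 0 := by simp [kttw, l.ne', not_lt.mpr l.le]

variable (t : ℕ → K) (p h : ℕ → ℕ)

def ktka (N : ℕ) : K := ∏ s ∈ Finset.Ioo (p N) (h N), t s
def ktth (N c : ℕ) : K := ∏ s ∈ (Finset.Ioo (p N) (h N)).erase c, t s

theorem ktka_th {N c : ℕ} (h1 : p N < c) (h2 : c < h N) : ktka t p h N = t c * ktth t p h N c := by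
  rw [ktka, ktth, Finset.mul_prod_erase _ _ (by simp [h1, h2])]

theorem ktwt_lt (x y : K) {N a : ℕ} (l : a < p N) : ktwt t p h x y N a = 0 := by
  simp [ktwt, kttw_gt t x l]
theorem ktwt_gt (x y : K) {N a : ℕ} (l : h N < a) : ktwt t p h x y N a = 0 := by
  simp [ktwt, kttw_gt t y l]
theorem ktwt_mid (x y : K) {N a : ℕ} (l : p N < a) (l2 : a < h N) :
    ktwt t p h x y N a = x * y * ktth t p h N a := by
  rw [ktwt, kttw_lt t x l, kttw_lt t y l2, ktth]
  have : (Finset.Ioo (p N) (h N)).erase a = Finset.Ioo (p N) a ∪ Finset.Ioo a (h N) := by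
    ext s; simp; omega
  rw [this, Finset.prod_union]
  · ring
  · rw [Finset.disjoint_left]; intro s; simp; omega
theorem ktwt_bot (x y : K) {N : ℕ} (l : p N < h N) :
    ktwt t p h x y N (p N) = y * ktka t p h N := by
  rw [ktwt, kttw_self, kttw_lt t y l, ktka]; ring
theorem ktwt_top (x y : K) {N : ℕ} (l : p N < h N) :
    ktwt t p h x y N (h N) = x * ktka t p h N := by
  rw [ktwt, kttw_self, kttw_lt t x l, ktka]; ring
theorem ktwt_eq (x y : K) {N : ℕ} (l : p N = h N) :
    ktwt t p h x y N (h N) = 1 := by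
  rw [ktwt, l, kttw_self, kttw_self]; ring

variable (H : ℕ)

theorem ktSS_peel (w : ℕ → ℕ → K) {N b : ℕ} (hb : b ≤ H) :
    ktSS w H (N+1) b = w N b * ktSS w H N b + ktSS w H (N+1) (b+1) := by
  rw [ktSS, ktSS, ← Finset.insert_Icc_add_one_left_eq_Icc hb, Finset.sum_insert (by simp)]

theorem ktSS_low (x y : K) (hp : Antitone p) (hpH : ∀ c, p c ≤ H) {N : ℕ} :
    ∀ {b : ℕ}, (∀ M, N = M + 1 → b ≤ p M) →
    ktSS (ktwt t p h x y) H N b = ktSS (ktwt t p h x y) H N 0 := by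
  cases N with
  | zero => intro b hb; rfl
  | succ N =>
    intro b
    induction b with
    | zero => intro _; rfl
    | succ b ih =>
      intro hb
      have hb' := hb N rfl
      have := hpH N
      rw [← ih (fun M hM => by have := hb M hM; omega), ktSS_peel _ _ (by omega : b ≤ H),
        ktwt_lt _ _ _ _ _ (by omega)]
      ring

/-- restricted sum -/
theorem ktSS_top (x y : K) (hhH : ∀ c, h c ≤ H) {N b : ℕ} :
    ktSS (ktwt t p h x y) H (N+1) b =
      ∑ a ∈ Finset.Icc b (h N), ktwt t p h x y N a * ktSS (ktwt t p h x y) H N a := by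
  rw [ktSS]
  symm
  apply Finset.sum_subset
  · exact Finset.Icc_subset_Icc le_rfl (hhH N)
  · intro a ha hn
    simp only [Finset.mem_Icc] at ha hn
    rw [ktwt_gt _ _ _ _ _ (by omega), zero_mul]

theorem ktSS_D0 (x y : K) (hhH : ∀ c, h c ≤ H) {N b : ℕ} (h1 : p N < b) (h2 : b ≤ h N) :
    ktSS (ktwt t p h x y) H (N+1) b = x * ktka t p h N * ktSS (ktwt t p h x y) H N (h N)
      + ∑ c ∈ Finset.Ico b (h N), x * y * ktth t p h N c * ktSS (ktwt t p h x y) H N c := by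
  rw [ktSS_top t p h H x y hhH, ← Finset.Ico_insert_right h2, Finset.sum_insert (by simp),
    ktwt_top _ _ _ _ _ (by omega)]
  congr 1
  apply Finset.sum_congr rfl
  intro c hc
  simp only [Finset.mem_Ico] at hc
  rw [ktwt_mid _ _ _ _ _ (by omega) hc.2]

theorem ktSS_diff (w : ℕ → ℕ → K) {N b : ℕ} {e : ℕ} (h2 : b ≤ e) (he : e ≤ H) :
    ktSS w H (N+1) b = ktSS w H (N+1) e +
      ∑ c ∈ Finset.Ico b e, w N c * ktSS w H N c := by
  rw [ktSS, ktSS]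
  have : Finset.Icc b H = Finset.Icc e H ∪ Finset.Ico b e := by ext s; simp; omega
  rw [this, Finset.sum_union]
  rw [Finset.disjoint_left]; intro s; simp; omega

theorem kt_D (hp : Antitone p) (hh : Antitone h) (hhH : ∀ c, h c ≤ H) (hpH : ∀ c, p c ≤ H)
    (x y : K) : ∀ N,
    (∀ M ≤ N, ktSS (ktwt t p h x y) H M 0 = ktSS (ktwt t p h y x) H M 0) →
    ∀ b, p N < b → b ≤ h N →
      ktSS (ktwt t p h x y) H (N+1) b - x * ktka t p h N * ktSS (ktwt t p h x y) H N b
      = ktSS (ktwt t p h y x) H (N+1) b - y * ktka t p h N * ktSS (ktwt t p h y x) H N b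
  | 0, _, b, h1, h2 => by
    rw [ktSS_D0 t p h H x y hhH h1 h2, ktSS_D0 t p h H y x hhH h1 h2]
    simp only [ktSS]
    rw [mul_comm x y]
    ring
  | N+1, hW, b, h1, h2 => by
    rw [ktSS_D0 t p h H x y hhH h1 h2, ktSS_D0 t p h H y x hhH h1 h2,
      ktSS_diff H _ h2 (hhH _), ktSS_diff H _ h2 (hhH _)]
    have key : ∀ c ∈ Finset.Ico b (h (N+1)),
        x * y * ktth t p h (N+1) c * ktSS (ktwt t p h x y) H (N+1) c
          - x * ktka t p h (N+1) * (ktwt t p h x y N c * ktSS (ktwt t p h x y) H N c)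
        = y * x * ktth t p h (N+1) c * ktSS (ktwt t p h y x) H (N+1) c
          - y * ktka t p h (N+1) * (ktwt t p h y x N c * ktSS (ktwt t p h y x) H N c) := by
      intro c hc
      simp only [Finset.mem_Ico] at hc
      have hhN : h (N+1) ≤ h N := hh (Nat.le_succ N)
      rcases lt_trichotomy c (p N) with hlt | heq | hgt
      · rw [ktwt_lt _ _ _ _ _ hlt, ktwt_lt _ _ _ _ _ hlt,
          ktSS_low t p h H x y hp hpH (N := N+1) (b := c) (fun M hM => by
            obtain rfl : N = M := by omega
            omega),
          ktSS_low t p h H y x hp hpH (N := N+1) (b := c) (fun M hM => by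
            obtain rfl : N = M := by omega
            omega), hW (N+1) le_rfl]
        ring
      · have hc2 : p N < h N := by omega
        rw [ktSS_low t p h H x y hp hpH (N := N+1) (b := c) (fun M hM => by
            obtain rfl : N = M := by omega
            omega),
          ktSS_low t p h H y x hp hpH (N := N+1) (b := c) (fun M hM => by
            obtain rfl : N = M := by omega
            omega), hW (N+1) le_rfl,
          ktSS_low t p h H x y hp hpH (N := N) (b := c) (fun M hM => by
            rw [heq]; exact hp (by omega)),
          ktSS_low t p h H y x hp hpH (N := N) (b := c) (fun M hM => by
            rw [heq]; exact hp (by omega)), hW N (by omega), heq,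
          ktwt_bot _ _ _ _ _ hc2, ktwt_bot _ _ _ _ _ hc2]
        ring
      · have ih := kt_D hp hh hhH hpH x y N (fun M hM => hW M (by omega)) c hgt (by omega)
        rw [ktwt_mid _ _ _ _ _ hgt (by omega), ktwt_mid _ _ _ _ _ hgt (by omega),
          ktka_th t p h (N := N+1) (c := c) (by omega) hc.2]
        rw [ktka_th t p h (N := N) (c := c) (by omega) (by omega)] at ih
        linear_combination x * y * ktth t p h (N+1) c * ih
    have ks := Finset.sum_congr rfl key
    rw [Finset.sum_sub_distrib, Finset.sum_sub_distrib, ← Finset.mul_sum, ← Finset.mul_sum] at ks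
    linear_combination ks

theorem kt_W (hp : Antitone p) (hh : Antitone h) (hhH : ∀ c, h c ≤ H) (hph : ∀ c, p c ≤ h c)
    (x y : K) (N : ℕ) : ktSS (ktwt t p h x y) H N 0 = ktSS (ktwt t p h y x) H N 0 := by
  have hpH : ∀ c, p c ≤ H := fun c => (hph c).trans (hhH c)
  induction N using Nat.strong_induction_on with
  | _ N ih =>
  cases N with
  | zero => rfl
  | succ N =>
  have hlow : ∀ x y : K, ∀ b ≤ p N,
      ktSS (ktwt t p h x y) H N b = ktSS (ktwt t p h x y) H N 0 := fun x y b hb =>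
    ktSS_low t p h H x y hp hpH (fun M hM => hb.trans (hp (by omega)))
  have hlow1 : ∀ x y : K, ktSS (ktwt t p h x y) H (N+1) (p N)
      = ktSS (ktwt t p h x y) H (N+1) 0 := fun x y =>
    ktSS_low t p h H x y hp hpH (fun M hM => hp (by omega))
  rcases (hph N).eq_or_lt with heq | hlt
  · have : ∀ x y : K, ktSS (ktwt t p h x y) H (N+1) 0 = ktSS (ktwt t p h x y) H N 0 := by
      intro x y
      rw [← hlow1, ktSS_top t p h H x y hhH, heq]
      simp only [Finset.Icc_self, Finset.sum_singleton]
      rw [ktwt_eq _ _ _ _ _ heq, ← heq, hlow x y _ le_rfl, one_mul]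
    rw [this, this, ih N (by omega)]
  · have hD := kt_D t p h H hp hh hhH hpH x y N (fun M hM => ih M (by omega)) (p N + 1)
      (by omega) (by omega)
    have hs : ∀ x y : K, ktSS (ktwt t p h x y) H (N+1) 0 =
        y * ktka t p h N * ktSS (ktwt t p h x y) H N 0 +
        ktSS (ktwt t p h x y) H (N+1) (p N + 1) := by
      intro x y
      rw [← hlow1, ktSS_peel _ _ (hpH N), ktwt_bot _ _ _ _ _ hlt, hlow x y _ le_rfl]
    have hz : y * ktSS (ktwt t p h x y) H N 0 + x * ktSS (ktwt t p h x y) H N (p N + 1)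
        = x * ktSS (ktwt t p h y x) H N 0 + y * ktSS (ktwt t p h y x) H N (p N + 1) := by
      cases N with
      | zero => simp only [ktSS]; ring
      | succ N =>
        have hpN := hp (Nat.le_succ N)
        have hhN := hh (Nat.le_succ N)
        simp only [Nat.succ_eq_add_one] at hpN hhN
        rcases hpN.eq_or_lt with he | hl
        · have hh1 : ∀ x y : K, ktSS (ktwt t p h x y) H (N+1) 0 =
              y * ktka t p h N * ktSS (ktwt t p h x y) H N 0 +
              ktSS (ktwt t p h x y) H (N+1) (p (N+1) + 1) := by
            intro x y
            rw [he, ← ktSS_low t p h H x y hp hpH (N := N+1) (b := p N)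
              (fun M hM => hp (by omega)), ktSS_peel _ _ (hpH N),
              ktwt_bot _ _ _ _ _ (by omega), ktSS_low t p h H x y hp hpH (N := N) (b := p N)
              (fun M hM => hp (by omega))]
          have e1 := hh1 x y
          have e2 := hh1 y x
          have i1 := ih (N+1) (by omega)
          have i2 := ih N (by omega)
          linear_combination x * (-e1) + y * e2 + (x + y) * i1 - x * y * ktka t p h N * i2
        · have hc : ∀ x y : K, ktSS (ktwt t p h x y) H (N+1) (p (N+1) + 1)
              = ktSS (ktwt t p h x y) H (N+1) 0 := fun x y =>
            ktSS_low t p h H x y hp hpH (fun M hM => by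
              obtain rfl : N = M := by omega
              omega)
          rw [hc, hc, ih (N+1) (by omega)]; ring
    rw [hs, hs]
    linear_combination hD + ktka t p h N * hz

theorem kt_star (hp : Antitone p) (hh : Antitone h) (hhH : ∀ c, h c ≤ H) (hph : ∀ c, p c ≤ h c)
    (x y : K) : ∀ N, (∀ M < N, 0 < h M) →
    (x - y) * ktSS (ktwt t p h x y) H N 0 =
      x * ktSS (ktwt t p h x y) H N 1 - y * ktSS (ktwt t p h y x) H N 1
  | 0, _ => by simp [ktSS]
  | N+1, hpos => by
    have hpH : ∀ c, p c ≤ H := fun c => (hph c).trans (hhH c)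
    have hsym := kt_W t p h H hp hh hhH hph x y
    rcases Nat.eq_zero_or_pos (p N) with h0 | h1
    · have ih := kt_star hp hh hhH hph x y N (fun M hM => hpos M (by omega))
      have hN := hpos N (by omega)
      have hD := kt_D t p h H hp hh hhH hpH x y N (fun M hM => hsym M) 1 (by omega) (by omega)
      have hs : ktSS (ktwt t p h x y) H (N+1) 0 =
        y * ktka t p h N * ktSS (ktwt t p h x y) H N 0 +
        ktSS (ktwt t p h x y) H (N+1) 1 := by
        rw [ktSS_peel _ _ (Nat.zero_le H)]
        have := ktwt_bot t p h x y (N := N) (by omega)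
        rw [h0] at this
        rw [this]
      rw [hs]
      linear_combination y * ktka t p h N * ih  - y * hD
    · have hc : ∀ x y : K, ktSS (ktwt t p h x y) H (N+1) 1
              = ktSS (ktwt t p h x y) H (N+1) 0 := fun x y =>
            ktSS_low t p h H x y hp hpH (fun M hM => by
              obtain rfl : N = M := by omega
              omega)
      rw [hc, hc, ← hsym (N+1)]; ring

end ktLocal

section ktG
variable {K : Type*} [Field K]

open Classical in
noncomputable def ktA (M H : ℕ) : Finset (Fin M → ℕ) :=
  (Fintype.piFinset fun _ : Fin M => Finset.range (H+1)).filter Antitone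

theorem mem_ktA {M H : ℕ} {f : Fin M → ℕ} : f ∈ ktA M H ↔ (∀ c, f c ≤ H) ∧ Antitone f := by
  simp [ktA, Nat.lt_succ_iff]

open Classical in
theorem kt_sum_SS (w : ℕ → ℕ → K) (H : ℕ) : ∀ N b,
    ∑ f ∈ (ktA N H).filter (fun f => ∀ c, b ≤ f c), ∏ c : Fin N, w c (f c) = ktSS w H N b
  | 0, b => by
    have : (ktA 0 H).filter (fun f => ∀ c, b ≤ f c) = {fun c => c.elim0} := by
      ext f
      simp only [Finset.mem_filter, mem_ktA, Finset.mem_singleton]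
      constructor
      · intro _; funext c; exact c.elim0
      · rintro rfl; exact ⟨⟨fun c => c.elim0, fun c => c.elim0⟩, fun c => c.elim0⟩
    rw [this]; simp [ktSS]
  | N+1, b => by
    rw [ktSS]
    have : ∀ a ∈ Finset.Icc b H, w N a * ktSS w H N a =
        ∑ f ∈ (ktA N H).filter (fun f => ∀ c, a ≤ f c), w N a * ∏ c : Fin N, w c (f c) := by
      intro a _
      rw [← kt_sum_SS w H N a, Finset.mul_sum]
    rw [Finset.sum_congr rfl this, Finset.sum_sigma']
    refine Finset.sum_bij' (fun f _ => ⟨f (Fin.last N), fun c => f c.castSucc⟩)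
      (fun s _ => Fin.snoc (α := fun _ => ℕ) s.2 s.1) ?_ ?_ ?_ ?_ ?_
    · intro f hf
      simp only [Finset.mem_filter, mem_ktA] at hf
      obtain ⟨⟨h1, h2⟩, h3⟩ := hf
      simp only [Finset.mem_sigma, Finset.mem_Icc, Finset.mem_filter, mem_ktA]
      refine ⟨⟨h3 _, h1 _⟩, ⟨fun c => h1 _, ?_⟩, fun c => h2 (Fin.le_last _)⟩
      intro c c' hc
      exact h2 (by simpa using hc)
    · rintro ⟨a, f⟩ hf
      simp only [Finset.mem_sigma, Finset.mem_Icc, Finset.mem_filter, mem_ktA] at hf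
      obtain ⟨⟨h1, h2⟩, ⟨h3, h4⟩, h5⟩ := hf
      simp only [Finset.mem_filter, mem_ktA]
      refine ⟨⟨?_, ?_⟩, ?_⟩
      · intro c
        refine Fin.lastCases ?_ (fun c => ?_) c <;> simp [h2, h3]
      · intro c c'
        refine Fin.lastCases ?_ (fun c => ?_) c <;> refine Fin.lastCases ?_ (fun c' => ?_) c'
        · simp
        · intro hc
          exfalso
          have := c'.isLt
          simp only [Fin.le_def, Fin.val_last, Fin.val_castSucc] at hc
          omega
        · intro _; simpa using h5 c
        · intro hc; simpa using h4 (by simpa using hc)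
      · intro c
        refine Fin.lastCases ?_ (fun c => ?_) c
        · simpa using h1
        · simpa using h1.trans (h5 c)
    · intro f _
      funext c
      refine Fin.lastCases ?_ (fun c => ?_) c <;> simp
    · rintro ⟨a, f⟩ _
      simp
    · intro f _
      simp only [Fin.prod_univ_castSucc, Fin.val_castSucc, Fin.val_last]
      ring

variable (t : ℕ → K)

def ktT {M : ℕ} (x : K) (μ l : Fin M → ℕ) : K := ∏ c, kttw t x (μ c) (l c)

noncomputable def ktG (M H : ℕ) : List K → (Fin M → ℕ) → K
  | [], l => if l = 0 then 1 else 0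
  | x :: xs, l => ∑ μ ∈ ktA M H, ktT t x μ l * ktG M H xs μ

def ktext {M : ℕ} (f : Fin M → ℕ) (c : ℕ) : ℕ := if hc : c < M then f ⟨c, hc⟩ else 0

theorem ktext_val {M : ℕ} (f : Fin M → ℕ) (c : Fin M) : ktext f c = f c := by
  simp [ktext]

theorem ktext_anti {M : ℕ} {f : Fin M → ℕ} (hf : Antitone f) : Antitone (ktext f) := by
  intro a b hab
  unfold ktext
  split_ifs with h1 h2
  · exact hf (by simpa using hab)
  · omega
  · omega
  · omega

theorem ktext_le {M H : ℕ} {f : Fin M → ℕ} (hf : ∀ c, f c ≤ H) (c : ℕ) : ktext f c ≤ H := by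
  unfold ktext
  split_ifs
  · exact hf _
  · omega

theorem ktT_zero {M : ℕ} {x : K} {μ l : Fin M → ℕ} (h : ¬ μ ≤ l) : ktT t x μ l = 0 := by
  simp only [Pi.le_def, not_forall, not_le] at h
  obtain ⟨c, hc⟩ := h
  exact Finset.prod_eq_zero (Finset.mem_univ c) (kttw_gt t x hc)

theorem ktTT_zero {M : ℕ} {x y : K} {r μ l : Fin M → ℕ} (h : ¬ r ≤ l) :
    ktT t x r μ * ktT t y μ l = 0 := by
  by_cases h1 : r ≤ μ
  · rw [ktT_zero t (x := y) (fun h2 => h (h1.trans h2)), mul_zero]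
  · rw [ktT_zero t h1, zero_mul]

def ktwt' (p h : ℕ → ℕ) (x y : K) (c a : ℕ) : K :=
  if 0 < h c ∧ a = 0 then 0 else ktwt t p h x y c a

theorem kt_W2 {M H : ℕ} {r l : Fin M → ℕ} (hr : r ∈ ktA M H) (hl : l ∈ ktA M H) (x y : K) :
    ∑ μ ∈ ktA M H, ktT t x r μ * ktT t y μ l = ∑ μ ∈ ktA M H, ktT t y r μ * ktT t x μ l := by
  classical
  by_cases hrl : r ≤ l
  · rw [mem_ktA] at hr hl
    have key : ∀ x y : K, ∑ μ ∈ ktA M H, ktT t x r μ * ktT t y μ l =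
        ktSS (ktwt t (ktext r) (ktext l) x y) H M 0 := by
      intro x y
      rw [← kt_sum_SS]
      simp only [Nat.zero_le, implies_true, Finset.filter_true]
      refine Finset.sum_congr rfl fun μ _ => ?_
      simp only [ktT, ktwt, ktext_val, Finset.prod_mul_distrib]
    rw [key, key]
    refine kt_W t _ _ H (ktext_anti hr.2) (ktext_anti hl.2) (ktext_le hl.1) ?_ x y M
    intro c
    unfold ktext
    split_ifs
    · exact hrl _
    · exact le_rfl
  · rw [Finset.sum_eq_zero fun μ _ => ktTT_zero t hrl, Finset.sum_eq_zero fun μ _ => ktTT_zero t hrl]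

theorem ktSS_w' (p h : ℕ → ℕ) (x y : K) (H : ℕ) : ∀ N b, 1 ≤ b →
    ktSS (ktwt' t p h x y) H N b = ktSS (ktwt t p h x y) H N b
  | 0, _, _ => rfl
  | N+1, b, hb => by
    rw [ktSS, ktSS]
    refine Finset.sum_congr rfl fun a ha => ?_
    simp only [Finset.mem_Icc] at ha
    rw [ktSS_w' p h x y H N a (by omega), ktwt', if_neg (by omega)]

theorem ktSS_w1 (p h : ℕ → ℕ) (x y : K) (H : ℕ) (N : ℕ) (hpos : ∀ M < N, 0 < h M) :
    ktSS (ktwt' t p h x y) H N 0 = ktSS (ktwt t p h x y) H N 1 := by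
  cases N with
  | zero => rfl
  | succ N =>
    rw [ktSS_peel _ _ (Nat.zero_le H), ktSS_w' t p h x y H (N+1) (0+1) (by omega), ktwt',
      if_pos ⟨hpos N (by omega), rfl⟩, zero_mul, zero_add]

theorem ktSS_z (w : ℕ → ℕ → K) (H N : ℕ) (h1 : w N 0 = 1) (h2 : ∀ a, 0 < a → w N a = 0) :
    ktSS w H (N+1) 0 = ktSS w H N 0 := by
  rw [ktSS, Finset.sum_eq_single 0]
  · rw [h1, one_mul]
  · intro a _ ha; rw [h2 a (by omega), zero_mul]
  · simp

theorem kt_star' (p h : ℕ → ℕ) (H : ℕ) (hp : Antitone p) (hh : Antitone h) (hhH : ∀ c, h c ≤ H)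
    (hph : ∀ c, p c ≤ h c) (x y : K) : ∀ N,
    (x - y) * ktSS (ktwt t p h x y) H N 0 =
      x * ktSS (ktwt' t p h x y) H N 0 - y * ktSS (ktwt' t p h y x) H N 0
  | 0 => by simp [ktSS]
  | N+1 => by
    rcases Nat.eq_zero_or_pos (h N) with h0 | h1
    · have hp0 : p N = 0 := by have := hph N; omega
      have ih := kt_star' p h H hp hh hhH hph x y N
      have z1 : ∀ x y : K, ktwt t p h x y N 0 = 1 := by
        intro x y
        have := ktwt_eq t p h x y (N := N) (by omega)
        rwa [h0] at this
      have z2 : ∀ x y : K, ∀ a, 0 < a → ktwt t p h x y N a = 0 := by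
        intro x y a ha
        exact ktwt_gt t p h x y (by omega)
      rw [ktSS_z _ _ _ (z1 x y) (z2 x y), ktSS_z (ktwt' t p h x y) _ _,
        ktSS_z (ktwt' t p h y x) _ _, ih]
      · rw [ktwt', if_neg (by omega), z1]
      · intro a ha; rw [ktwt', if_neg (by omega), z2 _ _ _ ha]
      · rw [ktwt', if_neg (by omega), z1]
      · intro a ha; rw [ktwt', if_neg (by omega), z2 _ _ _ ha]
    · have hpos : ∀ M < N + 1, 0 < h M := fun M hM => lt_of_lt_of_le h1 (hh (by omega))
      rw [ktSS_w1 t p h x y H _ hpos, ktSS_w1 t p h y x H _ hpos]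
      exact kt_star t p h H hp hh hhH hph x y _ hpos

open Classical in
noncomputable def ktAV (M H : ℕ) (l : Fin M → ℕ) : Finset (Fin M → ℕ) :=
  (ktA M H).filter (fun μ => ∀ c, 0 < l c → 0 < μ c)

theorem kt_star2 {M H : ℕ} {r l : Fin M → ℕ} (hr : r ∈ ktA M H) (hl : l ∈ ktA M H) (x y : K) :
    (x - y) * ∑ μ ∈ ktA M H, ktT t x r μ * ktT t y μ l
      = x * ∑ μ ∈ ktAV M H l, ktT t x r μ * ktT t y μ l
        - y * ∑ μ ∈ ktAV M H l, ktT t y r μ * ktT t x μ l := by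
  classical
  by_cases hrl : r ≤ l
  · rw [mem_ktA] at hr hl
    have key : ∀ x y : K, ∑ μ ∈ ktA M H, ktT t x r μ * ktT t y μ l =
        ktSS (ktwt t (ktext r) (ktext l) x y) H M 0 := by
      intro x y
      rw [← kt_sum_SS]
      simp only [Nat.zero_le, implies_true, Finset.filter_true]
      refine Finset.sum_congr rfl fun μ _ => ?_
      simp only [ktT, ktwt, ktext_val, Finset.prod_mul_distrib]
    have key2 : ∀ x y : K, ∑ μ ∈ ktAV M H l, ktT t x r μ * ktT t y μ l =
        ktSS (ktwt' t (ktext r) (ktext l) x y) H M 0 := by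
      intro x y
      rw [← kt_sum_SS]
      simp only [Nat.zero_le, implies_true, Finset.filter_true]
      rw [ktAV, Finset.sum_filter]
      refine Finset.sum_congr rfl fun μ _ => ?_
      split_ifs with hμ
      · simp only [ktT, ← Finset.prod_mul_distrib]
        refine Finset.prod_congr rfl fun c _ => ?_
        rw [ktwt', if_neg, ktwt, ktext_val, ktext_val]
        rintro ⟨h1, h2⟩
        rw [ktext_val] at h1
        have := hμ c h1
        omega
      · push Not at hμ
        obtain ⟨c, h1, h2⟩ := hμ
        symm
        refine Finset.prod_eq_zero (Finset.mem_univ c) ?_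
        rw [ktwt', if_pos]
        rw [ktext_val]
        exact ⟨h1, by omega⟩
    rw [key, key2, key2]
    refine kt_star' t _ _ H (ktext_anti hr.2) (ktext_anti hl.2) (ktext_le hl.1) ?_ x y M
    intro c
    unfold ktext
    split_ifs
    · exact hrl _
    · exact le_rfl
  · rw [Finset.sum_eq_zero fun μ _ => ktTT_zero t hrl, Finset.sum_eq_zero fun μ _ => ktTT_zero t hrl,
      Finset.sum_eq_zero fun μ _ => ktTT_zero t hrl]
    ring

theorem ktG_two (M H : ℕ) (x y : K) (xs : List K) (s : Finset (Fin M → ℕ)) (l : Fin M → ℕ) :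
    ∑ μ ∈ s, ktT t y μ l * ktG t M H (x :: xs) μ =
      ∑ r ∈ ktA M H, (∑ μ ∈ s, ktT t x r μ * ktT t y μ l) * ktG t M H xs r := by
  simp only [ktG, Finset.mul_sum, Finset.sum_mul]
  rw [Finset.sum_comm]
  refine Finset.sum_congr rfl fun r _ => Finset.sum_congr rfl fun μ _ => ?_
  ring

theorem ktG_perm {M H : ℕ} {xs ys : List K} (hp : xs.Perm ys) :
    ∀ l ∈ ktA M H, ktG t M H xs l = ktG t M H ys l := by
  induction hp with
  | nil => intro l _; rfl
  | cons x _ ih =>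
    intro l hl
    simp only [ktG]
    exact Finset.sum_congr rfl fun μ hμ => by rw [ih μ hμ]
  | swap x y xs =>
    intro l hl
    rw [ktG, ktG_two, ktG, ktG_two]
    refine Finset.sum_congr rfl fun r hr => ?_
    rw [kt_W2 t hr hl]
  | trans _ _ ih1 ih2 => intro l hl; rw [ih1 l hl, ih2 l hl]

theorem ktG_congr {t t' : ℕ → K} (h : ∀ s, 1 ≤ s → t s = t' s) (M H : ℕ) :
    ∀ (xs : List K) l, ktG t M H xs l = ktG t' M H xs l
  | [], l => rfl
  | x :: xs, l => by
    simp only [ktG]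
    refine Finset.sum_congr rfl fun μ _ => ?_
    rw [ktG_congr h M H xs]
    congr 1
    refine Finset.prod_congr rfl fun c _ => ?_
    unfold kttw
    congr 2
    congr 1
    refine Finset.prod_congr rfl fun s hs => ?_
    simp only [Finset.mem_Ioo] at hs
    exact h s (by omega)

end ktG

section ktC
variable {K : Type*} [Field K]

theorem ktPiC_sum {ι : Type*} (s : Finset ι) (φ : ι → (ℕ → K) → K) : ∀ j x,
    ktPiC j (fun x => ∑ i ∈ s, φ i x) x = ∑ i ∈ s, ktPiC j (φ i) x
  | 0, x => rfl
  | j+1, x => by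
    simp only [ktPiC, ktpp]
    rw [ktPiC_sum s φ j, ktPiC_sum s φ j, Finset.mul_sum, Finset.mul_sum, ← Finset.sum_sub_distrib,
      Finset.sum_div]

theorem ktPiC_mul (c : (ℕ → K) → K) (φ : (ℕ → K) → K) : ∀ j, 
    (∀ i < j, ∀ x, c (ktsw i x) = c x) → ∀ x,
    ktPiC j (fun x => c x * φ x) x = c x * ktPiC j φ x
  | 0, _, x => rfl
  | j+1, hc, x => by
    have ih := ktPiC_mul c φ j (fun i hi => hc i (by omega))
    simp only [ktPiC, ktpp]
    rw [ih, ih, hc j (by omega)]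
    ring

theorem ktPiC_congr {φ ψ : (ℕ → K) → K} : ∀ j x, Function.Injective x →
    (∀ y, Function.Injective y → (∀ b, j < b → y b = x b) → φ y = ψ y) →
    ktPiC j φ x = ktPiC j ψ x
  | 0, x, hx, h => h x hx (fun _ _ => rfl)
  | j+1, x, hx, h => by
    simp only [ktPiC, ktpp]
    rw [ktPiC_congr j x hx, ktPiC_congr j (ktsw j x) (ktsw_inj hx)]
    · intro y hy hb
      apply h y hy
      intro b hb'
      rw [hb b (by omega), ktsw_ne x (by omega) (by omega)]
    · intro y hy hb
      apply h y hy
      intro b hb'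
      rw [hb b (by omega)]

def ktl (x : ℕ → K) : ℕ → List K
  | 0 => []
  | j+1 => x j :: ktl x j

def ktl' (τ : K) (x : ℕ → K) : ℕ → List K
  | 0 => [τ]
  | j+1 => x (j+1) :: ktl' τ x j

theorem ktl_sw (x : ℕ → K) (i : ℕ) : ∀ j, j ≤ i → ktl (ktsw i x) j = ktl x j
  | 0, _ => rfl
  | j+1, h => by
    rw [ktl, ktl, ktl_sw x i j (by omega), ktsw_ne x (by omega) (by omega)]

noncomputable def ktlen {M : ℕ} (l : Fin M → ℕ) : ℕ := (Finset.univ.filter (fun c => 0 < l c)).card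

def ktup {M : ℕ} (l μ : Fin M → ℕ) : Fin M → ℕ := fun c => if 0 < l c then μ c + 1 else 0

theorem kttw_shift (t : ℕ → K) (y : K) (a h : ℕ) :
    kttw (fun s => t (s+1)) y a h = kttw t y (a+1) (h+1) := by
  unfold kttw
  have : ∏ s ∈ Finset.Ioo a h, t (s+1) = ∏ s ∈ Finset.Ioo (a+1) (h+1), t s := by
    rw [← Finset.map_add_right_Ioo a h 1, Finset.prod_map]; rfl
  rw [this]
  simp

theorem ktT_shift {M : ℕ} (t : ℕ → K) (y : K) {l μ : Fin M → ℕ} (h : μ ≤ l - 1) :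
    ktT (fun s => t (s+1)) y μ (l - 1) = ktT t y (ktup l μ) l := by
  refine Finset.prod_congr rfl fun c _ => ?_
  have hc := h c
  simp only [Pi.sub_apply, Pi.one_apply] at hc ⊢
  rw [kttw_shift]
  unfold ktup
  split_ifs with hl
  · congr 1; omega
  · have h1 : l c = 0 := by omega
    have h2 : μ c = 0 := by omega
    rw [h1, h2]; simp [kttw]

theorem ktG_one {M H : ℕ} (t : ℕ → K) (x : K) (l : Fin M → ℕ) :
    ktG t M H [x] l = ktT t x 0 l := by
  simp only [ktG]
  rw [Finset.sum_eq_single 0]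
  · simp
  · intro b _ hb; simp [hb]
  · intro h; exfalso; apply h; rw [mem_ktA]; exact ⟨fun c => Nat.zero_le _, fun _ _ _ => le_rfl⟩

theorem kt_sub_mem {M H : ℕ} {l : Fin M → ℕ} (h : l ∈ ktA M H) : l - 1 ∈ ktA M H := by
  rw [mem_ktA] at *
  refine ⟨fun c => ?_, fun a b hab => ?_⟩
  · have := h.1 c; simp only [Pi.sub_apply, Pi.one_apply]; omega
  · have := h.2 hab; simp only [Pi.sub_apply, Pi.one_apply]; omega

theorem ktup_mem {M H : ℕ} {l μ : Fin M → ℕ} (h : l ∈ ktA M H) (hμ : μ ∈ ktA M H)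
    (hle : μ ≤ l - 1) : ktup l μ ∈ ktA M H := by
  rw [mem_ktA] at *
  refine ⟨fun c => ?_, fun a b hab => ?_⟩
  · have := h.1 c; have := hle c; simp only [Pi.sub_apply, Pi.one_apply] at this
    unfold ktup; split_ifs <;> omega
  · have h1 := h.2 hab; have h2 := hμ.2 hab; unfold ktup; split_ifs <;> omega

theorem ktup_len {M : ℕ} (l μ : Fin M → ℕ) : ktlen (ktup l μ) = ktlen l := by
  unfold ktlen ktup
  congr 1
  ext c
  simp only [Finset.mem_filter, Finset.mem_univ, true_and]
  split_ifs <;> simp_all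

theorem ktup_sub {M : ℕ} {l μ : Fin M → ℕ} (hle : μ ≤ l - 1) : ktup l μ - 1 = μ := by
  funext c
  have := hle c
  simp only [Pi.sub_apply, Pi.one_apply] at this ⊢
  unfold ktup; split_ifs <;> omega

open Classical in
theorem kt_reidx {M H : ℕ} (t : ℕ → K) (y : K) {l : Fin M → ℕ} (hl : l ∈ ktA M H)
    (g : (Fin M → ℕ) → K) :
    ∑ μ ∈ (ktA M H).filter (fun μ => μ ≤ l - 1),
      ktT (fun s => t (s+1)) y μ (l - 1) * g (ktup l μ) =
    ∑ μ ∈ ktAV M H l, ktT t y μ l * g μ := by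
  have : ∑ μ ∈ ktAV M H l, ktT t y μ l * g μ =
      ∑ μ ∈ (ktAV M H l).filter (fun μ => μ ≤ l), ktT t y μ l * g μ := by
    symm
    apply Finset.sum_filter_of_ne
    intro μ _ hne
    by_contra hc
    exact hne (by rw [ktT_zero t hc, zero_mul])
  rw [this]
  refine Finset.sum_bij' (fun μ _ => ktup l μ) (fun μ _ => μ - 1) ?_ ?_ ?_ ?_ ?_
  · intro μ hμ
    simp only [Finset.mem_filter, ktAV] at hμ ⊢
    refine ⟨⟨ktup_mem hl hμ.1 hμ.2, fun c hc => ?_⟩, fun c => ?_⟩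
    · simp [ktup, hc]
    · have := hμ.2 c
      simp only [Pi.sub_apply, Pi.one_apply] at this
      show ktup l μ c ≤ l c
      unfold ktup; split_ifs <;> omega
  · intro μ hμ
    simp only [Finset.mem_filter, ktAV] at hμ ⊢
    refine ⟨kt_sub_mem hμ.1.1, fun c => ?_⟩
    have : μ c ≤ l c := hμ.2 c
    show μ c - 1 ≤ l c - 1
    omega
  · intro μ hμ
    simp only [Finset.mem_filter] at hμ
    exact ktup_sub hμ.2
  · intro μ hμ
    simp only [Finset.mem_filter, ktAV] at hμ
    funext c
    have h1 := hμ.1.2 c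
    have h2 : μ c ≤ l c := hμ.2 c
    simp only [ktup, Pi.sub_apply, Pi.one_apply]
    split_ifs with h
    · have := h1 h; omega
    · omega
  · intro μ hμ
    simp only [Finset.mem_filter] at hμ
    rw [ktT_shift t y hμ.2]

open Classical in
theorem kt_claim {M H : ℕ} (t : ℕ → K) : ∀ j, ∀ l ∈ ktA M H, ∀ x, Function.Injective x →
    ktPiC j (fun x => x 0 ^ (ktlen l) * ktG (fun s => t (s+1)) M H (ktl' (t 1) x j) (l - 1)) x
      = ktG t M H (ktl x (j+1)) l
  | 0, l, hl, x, hx => by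
    simp only [ktPiC, ktl', ktl]
    rw [ktG_one, ktG_one, ktT, ktT, ktlen, Finset.card_filter, ← Finset.prod_pow_eq_pow_sum,
      ← Finset.prod_mul_distrib]
    refine Finset.prod_congr rfl fun c _ => ?_
    simp only [Pi.zero_apply, Pi.sub_apply, Pi.one_apply]
    rcases Nat.eq_zero_or_pos (l c) with h0 | h1
    · rw [h0]; simp [kttw]
    · obtain ⟨v, hv⟩ : ∃ v, l c = v + 1 := ⟨l c - 1, by omega⟩
      rw [hv, kttw_shift, kttw_lt t (x 0) (by omega : 0 < v+1)]
      simp only [Nat.zero_lt_succ, if_true, pow_one, Nat.add_sub_cancel]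
      congr 1
      rcases Nat.eq_zero_or_pos v with h0 | h2
      · have e : Finset.Ioo 0 1 = (∅ : Finset ℕ) := by decide
        rw [h0]; simp [kttw, e]
      · rw [kttw_lt t _ (by omega : 0 + 1 < v + 1)]
        have : Finset.Ioo 0 (v+1) = insert 1 (Finset.Ioo (0+1) (v+1)) := by
          ext s; simp; omega
        rw [this, Finset.prod_insert (by simp)]
  | j+1, l, hl, x, hx => by
    have hΨ : ∀ x : ℕ → K, Function.Injective x →
      ktPiC j (fun x => x 0 ^ (ktlen l) *
          ktG (fun s => t (s+1)) M H (ktl' (t 1) x (j+1)) (l - 1)) x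
        = ∑ r ∈ ktA M H, (∑ μ ∈ ktAV M H l, ktT t (x j) r μ * ktT t (x (j+1)) μ l)
            * ktG t M H (ktl x j) r := by
      intro x hx
      rw [← ktG_two, ← kt_reidx t (x (j+1)) hl]
      have e1 : (fun x : ℕ → K => x 0 ^ (ktlen l) *
          ktG (fun s => t (s+1)) M H (ktl' (t 1) x (j+1)) (l - 1)) = 
          fun x => ∑ μ ∈ (ktA M H).filter (fun μ => μ ≤ l - 1),
            ktT (fun s => t (s+1)) (x (j+1)) μ (l-1) * (x 0 ^ (ktlen (ktup l μ)) *
              ktG (fun s => t (s+1)) M H (ktl' (t 1) x j) (ktup l μ - 1)) := by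
        funext x
        rw [ktl', ktG, Finset.mul_sum]
        symm
        rw [Finset.sum_filter]
        refine Finset.sum_congr rfl fun μ hμ => ?_
        split_ifs with h
        · rw [ktup_len, ktup_sub h]; ring
        · rw [ktT_zero _ h]; ring
      rw [e1, ktPiC_sum]
      refine Finset.sum_congr rfl fun μ hμ => ?_
      rw [Finset.mem_filter] at hμ
      rw [ktPiC_mul (fun x => ktT (fun s => t (s+1)) (x (j+1)) μ (l-1))]
      · rw [kt_claim t j (ktup l μ) (ktup_mem hl hμ.1 hμ.2) x hx, ktl]
      · intro i hi x
        rw [ktsw_ne x (by omega) (by omega)]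
    have h := kt_sub_ne hx j
    rw [ktPiC, ktpp, hΨ x hx, hΨ _ (ktsw_inj hx), div_eq_iff h]
    rw [ktl, ktl, ktG, ktG_two, ktl_sw x j j le_rfl, ktsw_left, ktsw_right, Finset.mul_sum,
      Finset.mul_sum, Finset.sum_mul, ← Finset.sum_sub_distrib]
    refine Finset.sum_congr rfl fun r hr => ?_
    have := kt_star2 t hr hl (x j) (x (j+1))
    linear_combination -ktG t M H (ktl x j) r * this

end ktC

section ktF
variable {K : Type*} [Field K]

theorem ktDdC_congr {φ ψ : (ℕ → K) → K} (h : ∀ y, Function.Injective y → φ y = ψ y) : ∀ j x,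
    Function.Injective x → ktDdC j φ x = ktDdC j ψ x
  | 0, x, hx => h x hx
  | j+1, x, hx => by
    simp only [ktDdC, ktdd]
    rw [ktDdC_congr h j x hx, ktDdC_congr h j (ktsw j x) (ktsw_inj hx)]

def ktR (k : ℕ) : ℕ → (ℕ → K) → K
  | 0, _ => 1
  | m+1, x => ktDdC k (fun x => x 0 ^ (m+1+k) * ktR k m (fun b => x (b+1))) x

noncomputable def ktF (k H m : ℕ) (x : ℕ → K) : K :=
  ktG (fun s => x (k+s)) H H (ktl x (k+1)) (fun c => m - c)

theorem ktl_perm (x : ℕ → K) (i : ℕ) : ∀ j, i + 1 < j → (ktl (ktsw i x) j).Perm (ktl x j)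
  | 0, h => by omega
  | j+1, h => by
    rcases (by omega : i + 1 = j ∨ i + 1 < j) with h1 | h1
    · subst h1
      simp only [ktl]
      rw [ktsw_left, ktsw_right, ktl_sw x i i le_rfl]
      exact List.Perm.swap _ _ _
    · rw [ktl, ktl, ktsw_ne x (by omega) (by omega)]
      exact (ktl_perm x i j h1).cons _

theorem ktl'_perm (τ : K) (x : ℕ → K) : ∀ j,
    (ktl' τ x j).Perm (τ :: ktl (fun b => x (b+1)) j)
  | 0 => List.Perm.refl _
  | j+1 => ((ktl'_perm τ x j).cons _).trans (List.Perm.swap _ _ _)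

theorem kt_lam_mem {H m : ℕ} (h : m ≤ H) : (fun c : Fin H => m - (c : ℕ)) ∈ ktA H H := by
  rw [mem_ktA]
  refine ⟨fun c => by omega, fun a b hab => ?_⟩
  have : (a : ℕ) ≤ b := hab
  simp only
  omega

theorem ktF_inv (k H m : ℕ) (h : m ≤ H) (i : ℕ) (hi : i < k) : ktInv i (ktF (K := K) k H m) := by
  intro x _
  unfold ktF
  rw [ktG_perm _ (ktl_perm x i (k+1) (by omega)) _ (kt_lam_mem h)]
  apply ktG_congr
  intro s hs
  rw [ktsw_ne x (by omega) (by omega)]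

theorem ktF_eq (k H : ℕ) : ∀ m, m ≤ H → ∀ x : ℕ → K, Function.Injective x →
    ktF k H m x = ktR k m x
  | 0, _, x, _ => by
    rw [ktR]
    unfold ktF
    have : (fun c : Fin H => 0 - (c : ℕ)) = 0 := by funext c; simp
    rw [this]
    have key : ∀ xs : List K, ktG (fun s => x (k+s)) H H xs 0 = 1 := by
      intro xs
      induction xs with
      | nil => simp [ktG]
      | cons a xs ih =>
        rw [ktG, Finset.sum_eq_single 0]
        · rw [ih]; simp [ktT, kttw_self]
        · intro b _ hb
          rw [ktT_zero, zero_mul]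
          intro hc
          apply hb
          funext c
          have : b c ≤ 0 := hc c
          simpa using this
        · intro hn; exfalso; apply hn
          rw [mem_ktA]; exact ⟨fun c => Nat.zero_le _, fun _ _ _ => le_rfl⟩
    exact key _
  | m+1, hm, x, hx => by
    have ih := ktF_eq k H m (by omega)
    rw [ktR]
    rw [← ktDdC_congr (φ := fun x => x 0 ^ (m+1+k) * ktF k H m (fun b => x (b+1))) (fun y hy => by
      rw [ih (fun b => y (b+1)) (hy.comp Nat.succ_injective)]) k x hx]
    rw [← kt_conv (k := k) (f := fun x => ktF k H m (fun b => x (b+1))) ?_ (m+1) k le_rfl x hx]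
    · have hc := kt_claim (H := H) (fun s => x (k+s)) k (fun c : Fin H => (m+1) - (c : ℕ))
        (kt_lam_mem hm) x hx
      unfold ktF
      rw [← hc]
      apply ktPiC_congr k x hx
      intro y hy hxy
      have e1 : ktlen (fun c : Fin H => (m+1) - (c : ℕ)) = m + 1 := by
        unfold ktlen
        have : (Finset.univ.filter (fun c : Fin H => 0 < m + 1 - (c : ℕ)))
          = Finset.univ.map (Fin.castLEEmb hm) := by
          ext c
          simp only [Finset.mem_filter, Finset.mem_univ, true_and, Finset.mem_map]
          constructor
          · intro h
            exact ⟨⟨c, by omega⟩, by ext; simp⟩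
          · rintro ⟨a, rfl⟩
            have := a.isLt
            simp
            omega
        rw [this]; simp
      have e2 : (fun c : Fin H => (m+1) - (c : ℕ)) - 1 = fun c : Fin H => m - (c : ℕ) := by
        funext c
        simp only [Pi.sub_apply, Pi.one_apply]
        omega
      rw [e1, e2]
      congr 1
      rw [ktG_perm _ (ktl'_perm (x (k+1)) y k) _ (kt_lam_mem (by omega))]
      have e3 : (x (k+1) :: ktl (fun b => y (b+1)) k) = ktl (fun b => y (b+1)) (k+1) := by
        rw [ktl, hxy (k+1) (by omega)]
      rw [e3]
      apply ktG_congr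
      intro s _
      rw [← hxy (k + (s+1)) (by omega)]; rfl
    · intro i h1 h2 y hy
      obtain ⟨i, rfl⟩ : ∃ i', i = i' + 1 := ⟨i - 1, by omega⟩
      have : (fun b => ktsw (i+1) y (b+1)) = ktsw i (fun b => y (b+1)) := by
        funext b
        simp only [ktsw, Equiv.swap_apply_def]
        congr 1
        split_ifs <;> omega
      show ktF k H m _ = ktF k H m _
      rw [this]
      exact ktF_inv k H m (by omega) i (by omega) _ (hy.comp Nat.succ_injective)

end ktF

section ktExp
variable {K : Type*} [Field K]

def ktQ {M j : ℕ} (f : Fin j → Fin M → ℕ) (l : Fin M → ℕ) (i : ℕ) : Fin M → ℕ :=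
  if i = 0 then 0 else if h : i - 1 < j then f ⟨i-1, h⟩ else l

theorem ktG_expand (t : ℕ → K) (M H : ℕ) (x : ℕ → K) : ∀ j (l : Fin M → ℕ),
    ktG t M H (ktl x (j+1)) l =
      ∑ f ∈ Fintype.piFinset (fun _ : Fin j => ktA M H),
        ∏ i ∈ Finset.range (j+1), ktT t (x i) (ktQ f l i) (ktQ f l (i+1))
  | 0, l => by
    rw [ktl, ktl, ktG_one]
    simp [ktQ]
  | j+1, l => by
    rw [ktl, ktG]
    have : ∀ μ ∈ ktA M H, ktT t (x (j+1)) μ l * ktG t M H (ktl x (j+1)) μ =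
       ∑ f ∈ Fintype.piFinset (fun _ : Fin j => ktA M H), ktT t (x (j+1)) μ l *
        ∏ i ∈ Finset.range (j+1), ktT t (x i) (ktQ f μ i) (ktQ f μ (i+1)) := by
      intro μ _
      rw [ktG_expand t M H x j μ, Finset.mul_sum]
    rw [Finset.sum_congr rfl this, Finset.sum_sigma']
    symm
    refine Finset.sum_bij' (fun f _ => ⟨f (Fin.last j), fun c => f c.castSucc⟩)
      (fun s _ => Fin.snoc (α := fun _ => Fin M → ℕ) s.2 s.1) ?_ ?_ ?_ ?_ ?_
    · intro f hf
      simp only [Fintype.mem_piFinset, Finset.mem_sigma] at hf ⊢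
      exact ⟨hf _, fun c => hf _⟩
    · rintro ⟨μ, f⟩ hf
      simp only [Fintype.mem_piFinset, Finset.mem_sigma] at hf ⊢
      intro c
      refine Fin.lastCases ?_ (fun c => ?_) c
      · simpa using hf.1
      · simpa using hf.2 c
    · intro f _
      funext c
      refine Fin.lastCases ?_ (fun c => ?_) c <;> simp
    · rintro ⟨a, f⟩ _
      simp
    · intro f _
      rw [Finset.prod_range_succ, mul_comm]
      have e : ∀ i, i ≤ j + 1 → ktQ f l i =
          ktQ (fun c : Fin j => f c.castSucc) (f (Fin.last j)) i := by
        intro i hi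
        unfold ktQ
        split_ifs with h1 h2 h3 h4
        · rfl
        · rfl
        · congr 1; ext; simp; omega
        · omega
        · omega
      congr 1
      · have e1 := e (j+1) le_rfl
        have e2 : ktQ (fun c : Fin j => f c.castSucc) (f (Fin.last j)) (j+1) = f (Fin.last j) := by
          simp [ktQ]
        rw [e1, e2]
        simp [ktQ]
      · refine Finset.prod_congr rfl fun i hi => ?_
        simp only [Finset.mem_range] at hi
        rw [e i (by omega), e (i+1) (by omega)]

open Classical in
theorem kt_Ioo_prod (t : ℕ → K) (q : ℕ → ℕ) (hq : Monotone q) (h0 : q 0 = 0) : ∀ j,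
    ∏ i ∈ Finset.range (j+1), ∏ s ∈ Finset.Ioo (q i) (q (i+1)), t s =
      ∏ s ∈ (Finset.Ioo 0 (q (j+1))).filter (fun s => ∀ i ∈ Finset.Icc 1 j, q i ≠ s), t s
  | 0 => by
    rw [zero_add, Finset.prod_range_one, h0]
    congr 1
    ext s; simp
  | j+1 => by
    rw [Finset.prod_range_succ, kt_Ioo_prod t q hq h0 j, ← Finset.prod_union]
    · congr 1
      ext s
      have m1 := hq (Nat.le_succ (j+1))
      simp only [Nat.succ_eq_add_one] at m1
      simp only [Finset.mem_union, Finset.mem_filter, Finset.mem_Ioo, Finset.mem_Icc]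
      constructor
      · rintro (⟨⟨h1, h2⟩, h3⟩ | ⟨h1, h2⟩)
        · refine ⟨⟨h1, by omega⟩, fun i hi => ?_⟩
          rcases (by omega : i ≤ j ∨ i = j + 1) with h | rfl
          · exact h3 i ⟨hi.1, h⟩
          · omega
        · refine ⟨⟨by omega, h2⟩, fun i hi => ?_⟩
          have := hq hi.2
          omega
      · rintro ⟨⟨h1, h2⟩, h3⟩
        have := h3 (j+1) (by omega)
        rcases (by omega : s < q (j+1) ∨ q (j+1) < s) with h | h
        · exact Or.inl ⟨⟨h1, h⟩, fun i hi => h3 i (by omega)⟩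
        · exact Or.inr ⟨h, h2⟩
    · rw [Finset.disjoint_left]
      intro s hs hs'
      simp only [Finset.mem_filter, Finset.mem_Ioo] at hs hs'
      omega

theorem kttw_le (t : ℕ → K) (x : K) {a h : ℕ} (l : a ≤ h) :
    kttw t x a h = x ^ (if a = h then 0 else 1) * ∏ s ∈ Finset.Ioo a h, t s := by
  rcases l.eq_or_lt with rfl | l
  · simp [kttw_self]
  · rw [kttw_lt t x l, if_neg l.ne, pow_one]

noncomputable def ktMP {m k : ℕ} (T B : Fin m → Fin (m+1)) (x : ℕ → K)
    (P : Fin k → Fin m → Fin (m+1)) : K :=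
  (∏ i : Fin (k+1), x i ^ (m - hstat T B P i)) * ∏ s : Fin (m-1), x (k+1+s) ^ (ustat T B P s)

theorem kt_extP {m k : ℕ} (T B : Fin m → Fin (m+1)) (hT : ∀ j, (T j : ℕ) = m)
    (hB : ∀ j, (B j : ℕ) = (j : ℕ)) (P : Fin k → Fin m → Fin (m+1)) (i : Fin (k+2)) (c : Fin m) :
    ktQ (fun i c => m - (P i c : ℕ)) (fun c : Fin m => m - (c : ℕ)) i c =
      m - (extP T B P i c : ℕ) := by
  have := i.isLt
  unfold ktQ extP
  split_ifs
  · simp [hT]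
  · omega
  · rfl
  · simp [hB]
  · omega

theorem kt_chain {m k : ℕ} (T B : Fin m → Fin (m+1)) (hT : ∀ j, (T j : ℕ) = m)
    (hB : ∀ j, (B j : ℕ) = (j : ℕ)) (P : Fin k → Fin m → Fin (m+1)) (hP : InPk T B P) :
    ∀ i, i < k + 1 → ktQ (fun i c => m - (P i c : ℕ)) (fun c : Fin m => m - (c : ℕ)) i ≤
      ktQ (fun i c => m - (P i c : ℕ)) (fun c : Fin m => m - (c : ℕ)) (i+1) := by
  intro i hi c
  unfold ktQ
  rw [if_neg (by omega : ¬ i + 1 = 0)]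
  rcases Nat.eq_zero_or_pos i with rfl | h0
  · simp
  · rw [if_neg (by omega), dif_pos (by omega : i - 1 < k)]
    by_cases h1 : i + 1 - 1 < k
    · rw [dif_pos h1]
      have h2 := hP.2 ⟨i-1, by omega⟩ (by simp only; omega) c
      have e : (i - 1 + 1) = i + 1 - 1 := by omega
      simp only [e, Fin.le_def] at h2
      simp only
      omega
    · rw [dif_neg h1]
      have h2 := ((hP.1 ⟨i-1, by omega⟩).2 c).1
      rw [Fin.le_def, hB] at h2
      simp only
      omega

theorem kt_term {m k : ℕ} (T B : Fin m → Fin (m+1)) (hT : ∀ j, (T j : ℕ) = m)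
    (hB : ∀ j, (B j : ℕ) = (j : ℕ)) (P : Fin k → Fin m → Fin (m+1)) (x : ℕ → K)
    (hP : ∀ i, i < k + 1 → ktQ (fun i c => m - (P i c : ℕ)) (fun c : Fin m => m - (c : ℕ)) i ≤
      ktQ (fun i c => m - (P i c : ℕ)) (fun c : Fin m => m - (c : ℕ)) (i+1)) :
    ∏ i ∈ Finset.range (k+1), ktT (fun s => x (k+s)) (x i)
      (ktQ (fun i c => m - (P i c : ℕ)) (fun c : Fin m => m - (c : ℕ)) i)
      (ktQ (fun i c => m - (P i c : ℕ)) (fun c : Fin m => m - (c : ℕ)) (i+1))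
    = ktMP T B x P := by
  classical
  set Q := ktQ (fun i c => m - (P i c : ℕ)) (fun c : Fin m => m - (c : ℕ)) with hQ
  have hmono : ∀ c, Monotone (fun i => Q i c) := by
    intro c
    apply monotone_nat_of_le_succ
    intro i
    by_cases hi : i < k + 1
    · exact hP i hi c
    · rw [hQ]
      unfold ktQ
      rw [if_neg (by omega), if_neg (by omega), dif_neg (by omega), dif_neg (by omega)]
  have e1 : ∏ i ∈ Finset.range (k+1), ktT (fun s => x (k+s)) (x i) (Q i) (Q (i+1)) =
      (∏ i ∈ Finset.range (k+1), ∏ c, x i ^ (if Q i c = Q (i+1) c then 0 else 1)) *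
      ∏ c, ∏ i ∈ Finset.range (k+1), ∏ s ∈ Finset.Ioo (Q i c) (Q (i+1) c), x (k+s) := by
    rw [Finset.prod_comm (s := Finset.univ), ← Finset.prod_mul_distrib]
    refine Finset.prod_congr rfl fun i hi => ?_
    rw [← Finset.prod_mul_distrib, ktT]
    refine Finset.prod_congr rfl fun c _ => ?_
    rw [kttw_le _ _ (hP i (by simpa using hi) c)]
  rw [e1, ktMP]
  congr 1
  · rw [Finset.prod_range (fun i => ∏ c, x i ^ (if Q i c = Q (i+1) c then 0 else 1))]
    refine Finset.prod_congr rfl fun i _ => ?_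
    rw [Finset.prod_pow_eq_pow_sum]
    congr 1
    have e2 : ∑ c, (if Q i c = Q (i+1) c then 0 else 1) +
        ∑ c, (if Q i c = Q (i+1) c then 1 else 0) = m := by
      rw [← Finset.sum_add_distrib]
      have : ∀ c : Fin m, ((if Q i c = Q (i+1) c then 0 else 1) +
        (if Q i c = Q (i+1) c then 1 else 0)) = 1 := by intro c; split_ifs <;> rfl
      simp [this]
    have e3 : ∑ c, (if Q i c = Q (i+1) c then 1 else 0) = hstat T B P i := by
      rw [hstat, Nat.card_eq_fintype_card, Fintype.card_subtype, Finset.card_filter]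
      refine Finset.sum_congr rfl fun c _ => ?_
      have a1 := kt_extP T B hT hB P i.castSucc c
      have a2 := kt_extP T B hT hB P i.succ c
      simp only [Fin.val_castSucc, Fin.val_succ] at a1 a2
      rw [← hQ] at a1 a2
      have b1 := (extP T B P i.castSucc c).isLt
      have b2 := (extP T B P i.succ c).isLt
      rw [a1, a2]
      congr 1
      rw [Fin.ext_iff, eq_iff_iff]
      omega
    omega
  · have e2 : ∀ c : Fin m, ∏ i ∈ Finset.range (k+1), ∏ s ∈ Finset.Ioo (Q i c) (Q (i+1) c), x (k+s)
        = ∏ s : Fin (m-1), x (k+1+s) ^ (if ((B c : ℕ) < m - ((s : ℕ) + 1) ∧ m - ((s : ℕ) + 1) < (T c : ℕ) ∧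
      ∀ i : Fin k, (P i c : ℕ) ≠ m - ((s : ℕ) + 1)) then 1 else 0) := by
      intro c
      rw [kt_Ioo_prod (fun s => x (k+s)) (fun i => Q i c) (hmono c) (by simp [hQ, ktQ])]
      have hl : Q (k+1) c = m - c := by simp [hQ, ktQ]
      have hm : ∀ s : Fin (m-1), (s : ℕ) + 1 < m := fun s => by have := s.isLt; omega
      simp only [hl]
      have e3 : ∀ s : Fin (m-1), x (k+1+s) ^ (if ((B c : ℕ) < m - ((s : ℕ) + 1) ∧ m - ((s : ℕ) + 1) < (T c : ℕ) ∧
          ∀ i : Fin k, (P i c : ℕ) ≠ m - ((s : ℕ) + 1)) then 1 else 0) =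
          if ((s : ℕ) + 1 < m - c ∧ ∀ i ∈ Finset.Icc 1 k, Q i c ≠ (s : ℕ) + 1) then x (k + (s+1)) else 1 := by
        intro s
        have hs := hm s
        have hiff : ((B c : ℕ) < m - ((s : ℕ) + 1) ∧ m - ((s : ℕ) + 1) < (T c : ℕ) ∧
          ∀ i : Fin k, (P i c : ℕ) ≠ m - ((s : ℕ) + 1)) ↔
            ((s : ℕ) + 1 < m - c ∧ ∀ i ∈ Finset.Icc 1 k, Q i c ≠ (s : ℕ) + 1) := by
          rw [hT, hB]
          constructor
          · rintro ⟨h1, h2, h3⟩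
            refine ⟨by omega, fun i hi => ?_⟩
            simp only [Finset.mem_Icc] at hi
            have := h3 ⟨i-1, by omega⟩
            rw [hQ, ktQ, if_neg (by omega), dif_pos (by omega)]
            omega
          · rintro ⟨h1, h2⟩
            refine ⟨by omega, by omega, fun i => ?_⟩
            have := h2 (i+1) (by simp)
            rw [hQ, ktQ, if_neg (by omega), dif_pos (by simp)] at this
            simp only [Nat.add_sub_cancel, Fin.eta] at this
            omega
        simp only [hiff]
        split_ifs
        · rw [pow_one]; congr 1; omega
        · rw [pow_zero]
      rw [Finset.prod_congr rfl (fun s _ => e3 s)]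
      trans ∏ s ∈ Finset.univ.filter (fun s : Fin (m-1) => (s : ℕ) + 1 < m - c ∧
        ∀ i ∈ Finset.Icc 1 k, Q i c ≠ (s : ℕ) + 1), x (k + ((s : ℕ)+1))
      swap
      · rw [Finset.prod_filter]
        refine Finset.prod_congr rfl fun s _ => ?_
        congr
      refine Finset.prod_bij' (fun s hs => ⟨s - 1, ?_⟩) (fun s _ => (s : ℕ) + 1) ?_ ?_ ?_ ?_ ?_
      · simp only [Finset.mem_filter, Finset.mem_Ioo] at hs
        omega
      · intro s hs
        simp only [Finset.mem_filter, Finset.mem_Ioo, Finset.mem_univ, true_and] at hs ⊢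
        have : s - 1 + 1 = s := by omega
        rw [this]
        exact ⟨hs.1.2, hs.2⟩
      · intro s hs
        simp only [Finset.mem_filter, Finset.mem_Ioo, Finset.mem_univ, true_and] at hs ⊢
        exact ⟨⟨by omega, hs.1⟩, hs.2⟩
      · intro s hs
        simp only [Finset.mem_filter, Finset.mem_Ioo] at hs ⊢
        omega
      · intro s hs
        ext; simp
      · intro s hs
        simp only [Finset.mem_filter, Finset.mem_Ioo] at hs ⊢
        congr 2
        omega
    rw [Finset.prod_congr rfl (fun c _ => e2 c), Finset.prod_comm]
    refine Finset.prod_congr rfl fun s _ => ?_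
    rw [Finset.prod_pow_eq_pow_sum]
    congr 1
    rw [ustat, Nat.card_eq_fintype_card, Fintype.card_subtype, Finset.card_filter]

open Classical in
theorem kt_fans {m k : ℕ} (T B : Fin m → Fin (m+1)) (hT : ∀ j, (T j : ℕ) = m)
    (hB : ∀ j, (B j : ℕ) = (j : ℕ)) (x : ℕ → K) :
    ktF k m m x = ∑ P ∈ Finset.univ.filter (fun P : Fin k → Fin m → Fin (m+1) => InPk T B P),
      ktMP T B x P := by
  unfold ktF
  rw [ktG_expand]
  set lam : Fin m → ℕ := fun c => m - (c : ℕ) with hlam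
  rw [← Finset.sum_filter_of_ne (p := fun f => ∀ i, i < k + 1 → ktQ f lam i ≤ ktQ f lam (i+1))]
  · symm
    refine Finset.sum_bij' (fun P _ => fun i c => m - (P i c : ℕ))
      (fun f _ => fun i c => ⟨m - f i c, by omega⟩) ?_ ?_ ?_ ?_ ?_
    · intro P hP
      simp only [Finset.mem_filter, Finset.mem_univ, true_and] at hP
      rw [Finset.mem_filter]
      refine ⟨?_, ?_⟩
      · rw [Fintype.mem_piFinset]
        intro i
        rw [mem_ktA]
        refine ⟨fun c => by omega, fun a b hab => ?_⟩
        have : (P i a : ℕ) ≤ P i b := (hP.1 i).1 hab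
        simp only
        omega
      · exact kt_chain T B hT hB P hP
    · intro f hf
      simp only [Finset.mem_filter, Fintype.mem_piFinset, mem_ktA] at hf
      obtain ⟨hf1, hf2⟩ := hf
      simp only [Finset.mem_filter, Finset.mem_univ, true_and]
      have hch : ∀ (i : Fin k) (hi : (i : ℕ) + 1 < k) c, f i c ≤ f ⟨i+1, hi⟩ c := by
        intro i hi c
        have := hf2 (i+1) (by omega) c
        unfold ktQ at this
        rw [if_neg (by omega), if_neg (by omega), dif_pos (by omega), dif_pos (by omega)] at this
        simpa using this
      have hlast : ∀ (i : Fin k) c, f i c ≤ lam c := by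
        have hmono : ∀ c, Monotone (fun i => ktQ f lam i c) := by
          intro c
          apply monotone_nat_of_le_succ
          intro i
          by_cases hi : i < k + 1
          · exact hf2 i hi c
          · unfold ktQ
            rw [if_neg (by omega), if_neg (by omega), dif_neg (by omega), dif_neg (by omega)]
        intro i c
        have := hmono c (by omega : (i : ℕ) + 1 ≤ k + 1)
        simpa [ktQ] using this
      refine ⟨fun i => ⟨?_, ?_⟩, ?_⟩
      · intro a b hab
        have := (hf1 i).2 hab
        rw [Fin.le_def]
        simp only
        omega
      · intro c
        have h1 := hlast i c
        simp only [hlam] at h1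
        rw [Fin.le_def, Fin.le_def, hT, hB]
        simp only
        omega
      · intro i hi c
        have := hch i hi c
        rw [Fin.le_def]
        simp only
        omega
    · intro P _
      funext i c
      ext
      have := (P i c).isLt
      simp only
      omega
    · intro f hf
      simp only [Finset.mem_filter, Fintype.mem_piFinset, mem_ktA] at hf
      funext i c
      have := (hf.1 i).1 c
      simp only
      omega
    · intro P hP
      rw [eq_comm]
      apply kt_term T B hT hB P x
      simp only [Finset.mem_filter, Finset.mem_univ, true_and] at hP
      exact kt_chain T B hT hB P hP
  · intro f _ hne i hi
    by_contra hc
    exact hne (Finset.prod_eq_zero (Finset.mem_range.mpr hi) (ktT_zero _ hc))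

end ktExp

section ktFK
variable {K : Type*} [Field K]

abbrev ktE (K : Type*) [Field K] := Module.End K ((ℕ → ℕ) → K)

def ktU (a : ℕ) : ktE K where
  toFun f := fun w => if w (a+1) < w a then f (ktsw a w) else 0
  map_add' f g := by funext w; simp only [Pi.add_apply]; split_ifs <;> simp
  map_smul' c f := by funext w; simp only [Pi.smul_apply, RingHom.id_apply]; split_ifs <;> simp

theorem ktU_apply (a : ℕ) (f : (ℕ → ℕ) → K) (w : ℕ → ℕ) :
    ktU a f w = if w (a+1) < w a then f (ktsw a w) else 0 := rfl

theorem ktU_sq (a : ℕ) : ktU a * ktU a = (0 : ktE K) := by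
  ext f w
  simp only [Module.End.mul_apply, ktU_apply, LinearMap.zero_apply, Pi.zero_apply, ktsw_left,
    ktsw_right]
  split_ifs <;> first | rfl | omega

theorem ktU_comm {a b : ℕ} (h : a + 2 ≤ b) : ktU a * ktU b = (ktU b * ktU a : ktE K) := by
  ext f w
  simp only [Module.End.mul_apply, ktU_apply]
  rw [ktsw_ne w (by omega : b + 1 ≠ a) (by omega), ktsw_ne w (by omega : b ≠ a) (by omega),
    ktsw_ne w (by omega : a + 1 ≠ b) (by omega), ktsw_ne w (by omega : a ≠ b) (by omega),
    ktsw_comm w h]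
  split_ifs <;> rfl

theorem ktsw_braid {A : Type*} (a : ℕ) (w : ℕ → A) : ktsw a (ktsw (a+1) (ktsw a w)) =
    ktsw (a+1) (ktsw a (ktsw (a+1) w)) := by
  funext b
  simp only [ktsw, Equiv.swap_apply_def]
  congr 1
  split_ifs <;> omega

theorem ktU_braid (a : ℕ) : ktU a * ktU (a+1) * ktU a = (ktU (a+1) * ktU a * ktU (a+1) : ktE K) := by
  ext f w
  simp only [Module.End.mul_apply, ktU_apply]
  have e1 : ∀ v : ℕ → ℕ, ktsw a v (a+1+1) = v (a+1+1) := fun v => ktsw_ne v (by omega) (by omega)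
  have e2 : ∀ v : ℕ → ℕ, ktsw (a+1) v a = v a := fun v => ktsw_ne v (by omega) (by omega)
  simp only [ktsw_left, ktsw_right, e1, e2]
  rw [ktsw_braid]
  split_ifs <;> first | rfl | omega

def ktB (x : K) : ℕ → ℕ → ktE K
  | _, 0 => 1
  | a, l+1 => (1 + x • ktU a) * ktB x (a+1) l

theorem ktB_comm_U (x : K) : ∀ l a b, b + 2 ≤ a → ktB x a l * ktU b = ktU b * ktB x a l
  | 0, a, b, _ => by simp [ktB]
  | l+1, a, b, h => by
    rw [ktB, mul_assoc, ktB_comm_U x l (a+1) b (by omega), ← mul_assoc, ← mul_assoc]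
    congr 1
    rw [add_mul, mul_add, smul_mul_assoc, mul_smul_comm, ktU_comm h, one_mul, mul_one]

theorem ktB_prefix (x y : K) (a : ℕ) :
    (1 + x • ktU a) * ((1 + x • ktU (a+1)) * ((1 + y • ktU a) * (1 - x • ktU (a+1)))) =
    (1 + (x + y) • ktU a + (x * y) • (ktU (a+1) * ktU a - ktU a * ktU (a+1)) : ktE K) := by
  have s1 := ktU_sq (K := K) a
  have s2 := ktU_sq (K := K) (a+1)
  have br := ktU_braid (K := K) a
  set u := ktU (K := K) a
  set v := ktU (K := K) (a+1)
  have s3 : u * v * u * v = 0 := by rw [br, mul_assoc, s2, mul_zero]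
  have m : ∀ z, u * (u * z) = 0 := fun z => by rw [← mul_assoc, s1, zero_mul]
  have m2 : ∀ z, v * (v * z) = 0 := fun z => by rw [← mul_assoc, s2, zero_mul]
  rw [mul_assoc, mul_assoc] at s3 br
  simp only [mul_add, add_mul, mul_sub, sub_mul, smul_mul_assoc, mul_smul_comm, one_mul, mul_one,
    mul_assoc, s1, s2, m, m2, s3, br, smul_zero, add_zero, sub_zero, smul_add, smul_sub, smul_smul,
    add_smul]
  have c1 : y * x = x * y := mul_comm _ _
  have c2 : x * (y * x) = x * (x * y) := by ring
  have c3 : y * (x * x) = x * (x * y) := by ring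
  simp only [c1, c2, c3]
  abel

theorem ktB_comm (x y : K) : ∀ l a, ktB x a l * ktB y a l = ktB y a l * ktB x a l
  | 0, a => by simp [ktB]
  | 1, a => by
    simp only [ktB, mul_one]
    simp only [mul_add, add_mul, smul_mul_assoc, mul_smul_comm, ktU_sq, mul_one, one_mul, smul_zero]
    abel
  | l+2, a => by
    have ih := ktB_comm x y (l+1) (a+1)
    have key : ∀ x y : K, ktB x (a+1) (l+1) * (1 + y • ktU a) =
        (1 + x • ktU (a+1)) * ((1 + y • ktU a) * (1 - x • ktU (a+1))) * ktB x (a+1) (l+1) := by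
      intro x y
      have h1 : (1 - x • ktU (a+1)) * (1 + x • ktU (a+1)) = (1 : ktE K) := by
        simp only [mul_add, sub_mul, smul_mul_assoc, mul_smul_comm, ktU_sq, mul_one, one_mul,
          smul_zero]
        abel
      have h2 : ktB x (a+1+1) l * (1 + y • ktU a) = (1 + y • ktU a) * ktB x (a+1+1) l := by
        rw [mul_add, add_mul, smul_mul_assoc, mul_smul_comm, ktB_comm_U x l _ _ (by omega), one_mul,
          mul_one]
      calc ktB x (a+1) (l+1) * (1 + y • ktU a)
          = (1 + x • ktU (a+1)) * (ktB x (a+1+1) l * (1 + y • ktU a)) := by rw [ktB, mul_assoc]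
        _ = (1 + x • ktU (a+1)) * ((1 + y • ktU a) * (((1 - x • ktU (a+1)) * (1 + x • ktU (a+1)))
              * ktB x (a+1+1) l)) := by rw [h2, h1, one_mul]
        _ = _ := by rw [ktB]; simp only [mul_assoc]
    have full : ∀ x y : K, ktB x a (l+2) * ktB y a (l+2) =
      (1 + (x + y) • ktU a + (x * y) • (ktU (a+1) * ktU a - ktU a * ktU (a+1))) *
        (ktB x (a+1) (l+1) * ktB y (a+1) (l+1)) := by
      intro x y
      rw [← ktB_prefix]
      have ex : ktB x a (l+2) = (1 + x • ktU a) * ktB x (a+1) (l+1) := rfl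
      have ey : ktB y a (l+2) = (1 + y • ktU a) * ktB y (a+1) (l+1) := rfl
      calc _ = (1 + x • ktU a) * (ktB x (a+1) (l+1) * (1 + y • ktU a)) * ktB y (a+1) (l+1) := by
            rw [ex, ey]; simp only [mul_assoc]
        _ = _ := by rw [key]; simp only [mul_assoc]
    rw [full, full, ih, add_comm y x, mul_comm y x]

def ktPr (N : ℕ) (x : ℕ → K) : ℕ → ktE K
  | 0 => 1
  | r+1 => ktB (x r) r (N - 1 - r) * ktPr N x r

theorem ktPr_sw_lt (N : ℕ) (x : ℕ → K) (i : ℕ) : ∀ r, r ≤ i → ktPr N (ktsw i x) r = ktPr N x r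
  | 0, _ => rfl
  | r+1, h => by rw [ktPr, ktPr, ktPr_sw_lt N x i r (by omega), ktsw_ne x (by omega) (by omega)]

theorem ktB_low (y : K) (a l : ℕ) : ktB y (a+1) l = (1 - y • ktU a) * ktB y a (l+1) := by
  rw [ktB, ← mul_assoc]
  have h1 : (1 - y • ktU a) * (1 + y • ktU a) = (1 : ktE K) := by
    simp only [mul_add, sub_mul, smul_mul_assoc, mul_smul_comm, ktU_sq, mul_one, one_mul, smul_zero]
    abel
  rw [h1, one_mul]

theorem ktPr_sw (N : ℕ) (x : ℕ → K) (i : ℕ) (hi : i + 2 ≤ N) : ∀ r,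
    ktPr N x (i+2+r) - ktPr N (ktsw i x) (i+2+r) = (x i - x (i+1)) • (ktU i * ktPr N x (i+2+r))
  | 0 => by
    simp only [add_zero, ktPr]
    rw [ktPr_sw_lt N x i i le_rfl, ktsw_left, ktsw_right]
    have e : N - 1 - i = (N - 1 - (i+1)) + 1 := by omega
    set l := N - 1 - (i+1)
    rw [e, ktB_low, ktB_low]
    have hc := ktB_comm (x i) (x (i+1)) (l+1) i
    have e1 : (1 - x (i+1) • ktU i) * ktB (x (i+1)) i (l+1) * (ktB (x i) i (l+1) * ktPr N x i) =
       (1 - x (i+1) • ktU i) * (ktB (x i) i (l+1) * ktB (x (i+1)) i (l+1) * ktPr N x i) := by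
      rw [hc]; simp only [mul_assoc]
    have e2 : (1 - x i • ktU i) * ktB (x i) i (l+1) * (ktB (x (i+1)) i (l+1) * ktPr N x i) =
       (1 - x i • ktU i) * (ktB (x i) i (l+1) * ktB (x (i+1)) i (l+1) * ktPr N x i) := by
      simp only [mul_assoc]
    rw [e1, e2, ← sub_mul, ← mul_assoc (ktU i) (1 - x (i+1) • ktU i) _]
    have e3 : ktU i * (1 - x (i+1) • ktU i) = (ktU i : ktE K) := by
      rw [mul_sub, mul_smul_comm, ktU_sq]; simp
    rw [e3, ← smul_mul_assoc]
    congr 1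
    rw [sub_smul (x i) (x (i+1)) (ktU i : ktE K)]; abel
  | r+1 => by
    have ih := ktPr_sw N x i hi r
    have : i + 2 + (r+1) = (i+2+r) + 1 := by omega
    rw [this, ktPr, ktPr, ktsw_ne x (by omega) (by omega), ← mul_sub, ih, mul_smul_comm,
      ← mul_assoc, ktB_comm_U _ _ _ _ (by omega), mul_assoc]

open Classical in
noncomputable def ktdel : (ℕ → ℕ) → K := fun w => if w = id then 1 else 0

noncomputable def ktZ (N : ℕ) (x : ℕ → K) (w : ℕ → ℕ) : K := ktPr N x (N-1) ktdel w

def ktw (N k j b : ℕ) : ℕ :=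
  if b < j then b else if b = j then N - 1 else if b ≤ k then b - 1
  else if b < N then N - 1 + k - b else b

theorem ktw_sw {N k j : ℕ} (hj : j < k) (hN : k + 2 ≤ N) :
    ktsw j (ktw N k j) = ktw N k (j+1) := by
  funext b
  rcases eq_or_ne b j with rfl | h1
  · rw [ktsw_left]; unfold ktw; split_ifs <;> omega
  · rcases eq_or_ne b (j+1) with rfl | h2
    · rw [ktsw_right]; unfold ktw; split_ifs <;> omega
    · rw [ktsw_ne _ h1 h2]; unfold ktw; split_ifs <;> omega

theorem ktZ_DdC {N k : ℕ} (hN : k + 2 ≤ N) : ∀ j, j ≤ k → ∀ x : ℕ → K, Function.Injective x →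
    ktZ N x (ktw N k j) = ktDdC j (fun x => ktZ N x (ktw N k 0)) x
  | 0, _, x, _ => rfl
  | j+1, hj, x, hx => by
    have ih := ktZ_DdC hN j (by omega)
    rw [ktDdC, ktdd, ← ih x hx, ← ih _ (ktsw_inj hx), eq_div_iff (kt_sub_ne hx j)]
    have h := ktPr_sw N x j (by omega) (N - 1 - (j+2))
    have e : j + 2 + (N - 1 - (j+2)) = N - 1 := by omega
    rw [e] at h
    have h2 := congrFun (LinearMap.congr_fun h ktdel) (ktw N k j)
    simp only [LinearMap.sub_apply, Pi.sub_apply, LinearMap.smul_apply, Pi.smul_apply,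
      Module.End.mul_apply, ktU_apply] at h2
    rw [if_pos (by unfold ktw; split_ifs <;> omega), ktw_sw (by omega) hN, smul_eq_mul] at h2
    unfold ktZ
    rw [h2]; ring

def ktio (N : ℕ) (w : ℕ → ℕ) : ℕ → ℕ
  | 0 => N - 1
  | b+1 => if w b < N - 1 then w b else w b + 1

def ktrho (N : ℕ) : ((ℕ → ℕ) → K) →ₗ[K] ((ℕ → ℕ) → K) where
  toFun f := fun w => f (ktio N w)
  map_add' f g := rfl
  map_smul' c f := rfl

theorem ktio_sw (N a : ℕ) (w : ℕ → ℕ) : ktsw (a+1) (ktio N w) = ktio N (ktsw a w) := by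
  funext b
  cases b with
  | zero => rw [ktsw_ne _ (by omega) (by omega)]; rfl
  | succ b =>
    rcases eq_or_ne b a with rfl | h1
    · rw [ktsw_left]; simp only [ktio, ktsw_left]
    · rcases eq_or_ne b (a+1) with rfl | h2
      · rw [ktsw_right]; simp only [ktio, ktsw_right]
      · rw [ktsw_ne _ (by omega) (by omega)]; simp only [ktio, ktsw_ne _ h1 h2]

theorem ktrho_U (N a : ℕ) (f : (ℕ → ℕ) → K) : ktrho N (ktU (a+1) f) = ktU a (ktrho N f) := by
  funext w
  show ktU (a+1) f (ktio N w) = _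
  rw [ktU_apply, ktU_apply]
  show _ = if _ then f (ktio N (ktsw a w)) else 0
  rw [ktio_sw]
  have : ktio N w (a+1+1) < ktio N w (a+1) ↔ w (a+1) < w a := by
    simp only [ktio]; split_ifs <;> omega
  simp only [this]

theorem ktrho_B (N : ℕ) (x : K) : ∀ l a (f : (ℕ → ℕ) → K),
    ktrho N (ktB x (a+1) l f) = ktB x a l (ktrho N f)
  | 0, a, f => rfl
  | l+1, a, f => by
    simp only [ktB, Module.End.mul_apply, LinearMap.add_apply, LinearMap.smul_apply,
      Module.End.one_apply, map_add, map_smul, ktrho_U, ktrho_B N x l (a+1)]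

def ktCy (a l b : ℕ) : ℕ := if b < a then b else if b = a then a + l else if b ≤ a + l then b - 1 else b

theorem ktB_supp (x : K) : ∀ l a (v : ℕ → ℕ) b, b < a → v b ≠ b → ktB x a l ktdel v = 0
  | 0, a, v, b, _, h => by
    show ktdel v = 0
    rw [ktdel, if_neg]
    rintro rfl
    exact h rfl
  | l+1, a, v, b, hb, h => by
    simp only [ktB, Module.End.mul_apply, LinearMap.add_apply, LinearMap.smul_apply,
      Module.End.one_apply, Pi.add_apply, Pi.smul_apply, ktU_apply]
    rw [ktB_supp x l (a+1) v b (by omega) h, ktB_supp x l (a+1) (ktsw a v) b (by omega)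
      (by rwa [ktsw_ne v (by omega) (by omega)])]
    simp

open Classical in
theorem ktB_cyc (x : K) : ∀ l a (v : ℕ → ℕ), v a = a + l →
    ktB x a l ktdel v = if v = ktCy a l then x ^ l else 0
  | 0, a, v, h => by
    show ktdel v = _
    have : ktCy a 0 = id := by funext b; unfold ktCy; simp only [id]; split_ifs <;> omega
    rw [this, ktdel, pow_zero]
  | l+1, a, v, h => by
    simp only [ktB, Module.End.mul_apply, LinearMap.add_apply, LinearMap.smul_apply,
      Module.End.one_apply, Pi.add_apply, Pi.smul_apply, ktU_apply]
    rw [ktB_supp x l (a+1) v a (by omega) (by omega),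
      ktB_cyc x l (a+1) (ktsw a v) (by rw [ktsw_right]; omega)]
    have hcy : ktsw a (ktCy (a+1) l) = ktCy a (l+1) := by
      funext b
      rcases eq_or_ne b a with rfl | h1
      · rw [ktsw_left]; unfold ktCy; split_ifs <;> omega
      · rcases eq_or_ne b (a+1) with rfl | h2
        · rw [ktsw_right]; unfold ktCy; split_ifs <;> omega
        · rw [ktsw_ne _ h1 h2]; unfold ktCy; split_ifs <;> omega
    by_cases hv : v = ktCy a (l+1)
    · rw [if_pos hv, if_pos, if_pos]
      · rw [smul_eq_mul]; ring
      · rw [hv, ← hcy, ktsw_sw]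
      · rw [hv]; unfold ktCy; split_ifs <;> omega
    · rw [if_neg hv, if_neg (c := ktsw a v = ktCy (a+1) l)]
      · simp
      · intro h; apply hv; rw [← hcy, ← h, ktsw_sw]

theorem ktrho_Pr (N : ℕ) (x : ℕ → K) : ∀ r,
    ktrho (N+1) (ktPr (N+1) x (r+1) ktdel) =
      ktPr N (fun b => x (b+1)) r (ktrho (N+1) (ktB (x 0) 0 N ktdel))
  | 0 => rfl
  | r+1 => by
    rw [ktPr, Module.End.mul_apply, ktrho_B, ktrho_Pr N x r, ktPr, Module.End.mul_apply]
    have : N + 1 - 1 - (r+1) = N - 1 - r := by omega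
    rw [this]

theorem ktrho_del (N : ℕ) (x : K) : ktrho (N+1) (ktB x 0 N ktdel) = x ^ N • ktdel := by
  funext w
  show ktB x 0 N ktdel (ktio (N+1) w) = _
  rw [ktB_cyc x N 0 _ (by simp [ktio])]
  have : ktio (N+1) w = ktCy 0 N ↔ w = id := by
    constructor
    · intro h
      funext b
      have := congrFun h (b+1)
      simp only [ktio, ktCy, id] at this ⊢
      split_ifs at this <;> omega
    · rintro rfl
      funext b
      cases b with
      | zero => simp [ktio, ktCy]
      | succ b =>
        show (if b < N + 1 - 1 then b else b + 1) = _
        unfold ktCy; split_ifs <;> first | omega | contradiction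
  simp only [Pi.smul_apply, ktdel, smul_eq_mul]
  rcases Classical.em (w = id) with h | h
  · rw [if_pos (this.2 h), if_pos h, mul_one]
  · rw [if_neg (fun hh => h (this.1 hh)), if_neg h, mul_zero]

theorem ktZ_shift (N : ℕ) (hN : 1 ≤ N) (x : ℕ → K) (w : ℕ → ℕ) :
    ktZ (N+1) x (ktio (N+1) w) = x 0 ^ N * ktZ N (fun b => x (b+1)) w := by
  have h := congrFun (ktrho_Pr N x (N-1)) w
  rw [ktrho_del, map_smul] at h
  have e : N - 1 + 1 = N + 1 - 1 := by omega
  rw [e] at h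
  exact h

theorem ktZ_R (k : ℕ) : ∀ m (x : ℕ → K), Function.Injective x →
    ktZ (m+k+1) x (ktw (m+k+1) k k) = ktR k m x
  | 0, x, _ => by
    rw [ktR]
    have : ktw (0+k+1) k k = id := by
      funext b; unfold ktw; simp only [id]; split_ifs <;> omega
    rw [this, ktZ]
    have key : ∀ x : K, ∀ l a (f : (ℕ → ℕ) → K), f id = 1 → ktB x a l f id = 1 := by
      intro x l
      induction l with
      | zero => intro a f h; exact h
      | succ l ih =>
        intro a f h
        simp only [ktB, Module.End.mul_apply, LinearMap.add_apply, LinearMap.smul_apply,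
          Module.End.one_apply, Pi.add_apply, Pi.smul_apply, ktU_apply, ih _ f h]
        simp
    have key2 : ∀ r, ktPr (0+k+1) x r ktdel id = 1 := by
      intro r
      induction r with
      | zero => show ktdel id = 1; simp [ktdel]
      | succ r ih => rw [ktPr, Module.End.mul_apply]; exact key _ _ _ _ ih
    exact key2 _
  | m+1, x, hx => by
    rw [ktZ_DdC (by omega) k le_rfl x hx, ktR]
    apply ktDdC_congr _ k x hx
    intro y hy
    have e : ktw (m+1+k+1) k 0 = ktio (m+k+1+1) (ktw (m+k+1) k k) := by
      funext b
      cases b with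
      | zero => simp [ktw, ktio]; omega
      | succ b => simp only [ktw, ktio]; split_ifs <;> first | contradiction | omega
    have e2 : m + 1 + k + 1 = m+k+1+1 := by omega
    rw [e, e2, ktZ_shift _ (by omega),
      ktZ_R k m (fun b => y (b+1)) (hy.comp Nat.succ_injective)]
    congr 2
    omega

end ktFK

section ktWord
variable {K : Type*} [Field K]

def ktOp (x : ℕ → K) : List (ℕ × ℕ) → ktE K
  | [] => 1
  | c :: L => (1 + x c.1 • ktU (c.1 + c.2)) * ktOp x L

def ktRow (i : ℕ) : ℕ → ℕ → List (ℕ × ℕ)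
  | _, 0 => []
  | j, l+1 => (i, j) :: ktRow i (j+1) l

def ktWd (N : ℕ) : ℕ → List (ℕ × ℕ)
  | 0 => []
  | r+1 => ktRow r 0 (N - 1 - r) ++ ktWd N r

theorem ktOp_row (x : ℕ → K) (r : ℕ) (L : List (ℕ × ℕ)) : ∀ l j,
    ktOp x (ktRow r j l ++ L) = ktB (x r) (r + j) l * ktOp x L
  | 0, j => by simp [ktRow, ktB]
  | l+1, j => by
    rw [ktRow, List.cons_append, ktOp, ktOp_row x r L l (j+1), ktB, mul_assoc]
    rfl

theorem ktOp_wd (N : ℕ) (x : ℕ → K) : ∀ r, ktOp x (ktWd N r) = ktPr N x r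
  | 0 => rfl
  | r+1 => by rw [ktWd, ktOp_row, ktOp_wd N x r, ktPr, add_zero]

theorem kt_mem_row (r : ℕ) (c : ℕ × ℕ) : ∀ l j, c ∈ ktRow r j l ↔ c.1 = r ∧ j ≤ c.2 ∧ c.2 < j + l
  | 0, j => by simp [ktRow]
  | l+1, j => by
    rw [ktRow, List.mem_cons, kt_mem_row r c l (j+1), Prod.ext_iff]
    simp only
    omega

theorem kt_mem_wd (N : ℕ) (c : ℕ × ℕ) : ∀ r, c ∈ ktWd N r ↔ c.1 < r ∧ c.1 + c.2 + 2 ≤ N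
  | 0 => by simp [ktWd]
  | r+1 => by
    rw [ktWd, List.mem_append, kt_mem_row, kt_mem_wd N c r]
    omega

theorem kt_nodup_row (r : ℕ) : ∀ l j, (ktRow r j l).Nodup
  | 0, j => by simp [ktRow]
  | l+1, j => by
    rw [ktRow, List.nodup_cons]
    refine ⟨?_, kt_nodup_row r l (j+1)⟩
    rw [kt_mem_row]; simp only; omega

theorem kt_nodup_wd (N : ℕ) : ∀ r, (ktWd N r).Nodup
  | 0 => by simp [ktWd]
  | r+1 => by
    rw [ktWd, List.nodup_append]
    refine ⟨kt_nodup_row _ _ _, kt_nodup_wd N r, ?_⟩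
    rintro a ha b hb rfl
    rw [kt_mem_row] at ha
    rw [kt_mem_wd] at hb
    omega

def ktRed (S : Finset (ℕ × ℕ)) : List (ℕ × ℕ) → (ℕ → ℕ) → Prop
  | [], w => w = id
  | c :: L, w => (c ∈ S ∧ w (c.1+c.2+1) < w (c.1+c.2) ∧ ktRed S L (ktsw (c.1+c.2) w)) ∨
      (c ∉ S ∧ ktRed S L w)

theorem ktRed_congr {S S' : Finset (ℕ × ℕ)} : ∀ (L : List (ℕ × ℕ)) (w : ℕ → ℕ),
    (∀ c ∈ L, c ∈ S ↔ c ∈ S') → (ktRed S L w ↔ ktRed S' L w)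
  | [], w, _ => Iff.rfl
  | c :: L, w, h => by
    have h1 := h c (by simp)
    have h2 := fun w => ktRed_congr L w (fun c hc => h c (by simp [hc]))
    simp only [ktRed, h1, h2]

open Classical in
theorem kt_gf (x : ℕ → K) : ∀ (L : List (ℕ × ℕ)), L.Nodup → ∀ w : ℕ → ℕ,
    ktOp x L ktdel w = ∑ S ∈ L.toFinset.powerset, if ktRed S L w then ∏ c ∈ S, x c.1 else 0
  | [], _, w => by
    show ktdel w = _
    rw [ktdel]
    by_cases h : w = id <;> simp [ktRed, h]
  | c :: L, hL, w => by
    rw [List.nodup_cons] at hL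
    have ih := kt_gf x L hL.2
    have hc : c ∉ L.toFinset := by simpa using hL.1
    rw [List.toFinset_cons, Finset.sum_powerset_insert hc]
    simp only [ktOp, Module.End.mul_apply, LinearMap.add_apply, LinearMap.smul_apply,
      Module.End.one_apply, Pi.add_apply, Pi.smul_apply, ktU_apply, ih]
    congr 1
    · apply Finset.sum_congr rfl
      intro S hS
      have : c ∉ S := fun h => hc (Finset.mem_powerset.1 hS h)
      simp only [ktRed, this, false_and, not_false_eq_true, true_and, false_or]
    · rw [smul_eq_mul]
      split_ifs with hd
      · rw [Finset.mul_sum]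
        apply Finset.sum_congr rfl
        intro S hS
        have hcS : c ∉ S := fun h => hc (Finset.mem_powerset.1 hS h)
        have e : ktRed (insert c S) (c :: L) w ↔ ktRed S L (ktsw (c.1+c.2) w) := by
          rw [← ktRed_congr (S := insert c S) (S' := S)]
          · simp [ktRed, hd]
          · intro c' hc'
            have : c' ≠ c := by rintro rfl; exact hL.1 hc'
            simp [this]
        simp only [e, Finset.prod_insert hcS, mul_ite, mul_zero]
      · rw [mul_zero]
        symm
        apply Finset.sum_eq_zero
        intro S _
        rw [if_neg]
        simp [ktRed, hd]

/-- rank function -/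
def ktr (w : ℕ → ℕ) (p : ℕ) : ℕ → ℕ
  | 0 => 0
  | q+1 => ktr w p q + if w q < p then 1 else 0

theorem ktr_sw_lo (w : ℕ → ℕ) (p a : ℕ) : ∀ q, q ≤ a → ktr (ktsw a w) p q = ktr w p q
  | 0, _ => rfl
  | q+1, h => by rw [ktr, ktr, ktr_sw_lo w p a q (by omega), ktsw_ne w (by omega) (by omega)]

theorem ktr_sw_mid (w : ℕ → ℕ) (p a : ℕ) :
    ktr (ktsw a w) p (a+1) = ktr w p a + if w (a+1) < p then 1 else 0 := by
  rw [ktr, ktr_sw_lo w p a a le_rfl, ktsw_left]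

theorem ktr_sw_hi (w : ℕ → ℕ) (p a : ℕ) : ∀ q, ktr (ktsw a w) p (a+2+q) = ktr w p (a+2+q)
  | 0 => by
    show ktr (ktsw a w) p (a+1) + _ = ktr w p (a+1) + _
    rw [ktr_sw_mid, ktr, ktsw_right]; omega
  | q+1 => by
    rw [show a + 2 + (q+1) = (a+2+q)+1 by omega, ktr, ktr]
    rw [ktr_sw_hi w p a q, ktsw_ne w (by omega : a+2+q ≠ a) (by omega)]

theorem ktr_sw_ne (w : ℕ → ℕ) (p a q : ℕ) (h : q ≠ a + 1) : ktr (ktsw a w) p q = ktr w p q := by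
  rcases Nat.lt_or_ge q (a+1) with h1 | h1
  · exact ktr_sw_lo w p a q (by omega)
  · obtain ⟨t, rfl⟩ : ∃ t, q = a + 2 + t := ⟨q - (a+2), by omega⟩
    exact ktr_sw_hi w p a t

theorem ktr_id (p : ℕ) : ∀ q, ktr id p q = min p q
  | 0 => by simp [ktr]
  | q+1 => by rw [ktr, ktr_id p q]; simp only [id]; split_ifs <;> omega

theorem ktr_le (w : ℕ → ℕ) (p : ℕ) : ∀ q, ktr w p q ≤ q
  | 0 => by simp [ktr]
  | q+1 => by have := ktr_le w p q; rw [ktr]; split_ifs <;> omega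

theorem ktr_full (w : ℕ → ℕ) (p : ℕ) : ∀ q, q ≤ ktr w p q → ∀ b < q, w b < p
  | 0, _, b, hb => by omega
  | q+1, h, b, hb => by
    rw [ktr] at h
    have := ktr_le w p q
    split_ifs at h with h1
    · rcases Nat.lt_or_ge b q with h2 | h2
      · exact ktr_full w p q (by omega) b h2
      · rwa [show b = q by omega]
    · omega

theorem ktr_base {w : ℕ → ℕ} (hw : Function.Injective w) (h : ∀ p q, min p q ≤ ktr w p q) :
    w = id := by
  have h1 : ∀ b, w b ≤ b := fun b => by
    have := ktr_full w (b+1) (b+1) (by simpa using h (b+1) (b+1)) b (by omega)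
    omega
  funext b
  induction b using Nat.strong_induction_on with
  | _ b ih =>
    have := h1 b
    rcases Nat.lt_or_ge (w b) b with h2 | h2
    · have h3 := ih (w b) h2
      exact absurd (hw h3) (by omega)
    · simp only [id]; omega

open Classical in
noncomputable def ktM (S : Finset (ℕ × ℕ)) (p : ℕ) : List (ℕ × ℕ) → ℕ → ℕ
  | [], q => min p q
  | c :: L, q => if q = c.1+c.2+1 ∧ c ∈ S then
      max (ktM S p L (c.1+c.2)) (ktM S p L (c.1+c.2+1+1) - 1) else ktM S p L q

theorem ktM_step (S : Finset (ℕ × ℕ)) (p : ℕ) : ∀ (L : List (ℕ × ℕ)) q,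
    ktM S p L q ≤ ktM S p L (q+1) ∧ ktM S p L (q+1) ≤ ktM S p L q + 1
  | [], q => by simp only [ktM]; omega
  | c :: L, q => by
    have h1 := ktM_step S p L q
    have h2 := ktM_step S p L (c.1+c.2)
    have h3 := ktM_step S p L (c.1+c.2+1)
    simp only [ktM]
    split_ifs with g1 g2 g2
    · omega
    · obtain ⟨rfl, _⟩ := g1
      omega
    · have : q = c.1 + c.2 := by omega
      subst this
      omega
    · exact h1

theorem ktM_le (S : Finset (ℕ × ℕ)) (p : ℕ) : ∀ (L : List (ℕ × ℕ)) q, ktM S p L q ≤ min p q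
  | [], q => by simp only [ktM]; omega
  | c :: L, q => by
    have h1 := ktM_le S p L q
    have h2 := ktM_le S p L (c.1+c.2)
    have h3 := ktM_le S p L (c.1+c.2+1+1)
    simp only [ktM]
    split_ifs <;> omega

theorem ktM_mono (S : Finset (ℕ × ℕ)) (p : ℕ) (L : List (ℕ × ℕ)) (q : ℕ) : ∀ t,
    ktM S p L q ≤ ktM S p L (q+t) ∧ ktM S p L (q+t) ≤ ktM S p L q + t
  | 0 => by simp
  | t+1 => by
    have := ktM_mono S p L q t
    have := ktM_step S p L (q+t)
    rw [show q + (t+1) = q+t+1 by omega]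
    omega

theorem ktM_cons_le (S : Finset (ℕ × ℕ)) (p : ℕ) (c : ℕ × ℕ) (L : List (ℕ × ℕ)) (q : ℕ) :
    ktM S p (c :: L) q ≤ ktM S p L q := by
  have h2 := ktM_step S p L (c.1+c.2)
  have h3 := ktM_step S p L (c.1+c.2+1)
  simp only [ktM]
  split_ifs with g
  · obtain ⟨rfl, _⟩ := g
    omega
  · exact le_rfl

def ktCont (S : Finset (ℕ × ℕ)) : List (ℕ × ℕ) → (ℕ → ℕ) → Prop
  | [], w => w = id
  | c :: L, w => ktCont S L w ∨
      (c ∈ S ∧ w (c.1+c.2+1) < w (c.1+c.2) ∧ ktCont S L (ktsw (c.1+c.2) w))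

theorem ktCont_iff (S : Finset (ℕ × ℕ)) : ∀ (L : List (ℕ × ℕ)) (w : ℕ → ℕ), Function.Injective w →
    (ktCont S L w ↔ ∀ p q, ktM S p L q ≤ ktr w p q)
  | [], w, hw => by
    simp only [ktCont, ktM]
    constructor
    · rintro rfl p q; rw [ktr_id]
    · exact ktr_base hw
  | c :: L, w, hw => by
    have ih1 := ktCont_iff S L w hw
    have ih2 := ktCont_iff S L (ktsw (c.1+c.2) w) (ktsw_inj hw)
    simp only [ktCont, ih1, ih2]
    constructor
    · rintro (h | ⟨hc, hd, h⟩) p q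
      · exact (ktM_cons_le S p c L q).trans (h p q)
      · simp only [ktM]
        have r1 : ktr w p (c.1+c.2+1) = ktr w p (c.1+c.2) + _ := ktr.eq_2 _ _ _
        have r2 : ktr w p (c.1+c.2+1+1) = ktr w p (c.1+c.2+1) + _ := ktr.eq_2 _ _ _
        split_ifs with g
        · obtain ⟨rfl, _⟩ := g
          have h1 := h p (c.1+c.2)
          have h2 := h p (c.1+c.2+1+1)
          rw [ktr_sw_ne _ _ _ _ (by omega)] at h1 h2
          split_ifs at r1 r2 <;> omega
        · have := h p q
          rwa [ktr_sw_ne _ _ _ _ (fun e => g ⟨e, hc⟩)] at this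
    · intro h
      by_cases hc : c ∈ S
      · rcases Nat.lt_or_ge (w (c.1+c.2+1)) (w (c.1+c.2)) with hd | hd
        · right
          refine ⟨hc, hd, fun p q => ?_⟩
          rcases eq_or_ne q (c.1+c.2+1) with rfl | hq
          · rw [ktr_sw_mid]
            have r1 : ktr w p (c.1+c.2+1) = ktr w p (c.1+c.2) + _ := ktr.eq_2 _ _ _
            have r2 : ktr w p (c.1+c.2+1+1) = ktr w p (c.1+c.2+1) + _ := ktr.eq_2 _ _ _
            have h1 := h p (c.1+c.2)
            have h2 := h p (c.1+c.2+1+1)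
            simp only [ktM] at h1 h2
            rw [if_neg (by omega)] at h1 h2
            have := ktM_step S p L (c.1+c.2)
            have := ktM_step S p L (c.1+c.2+1)
            split_ifs at r1 r2 ⊢ <;> omega
          · have := h p q
            simp only [ktM] at this
            rw [if_neg (by tauto)] at this
            rwa [ktr_sw_ne _ _ _ _ hq]
        · left
          intro p q
          rcases eq_or_ne q (c.1+c.2+1) with rfl | hq
          · have r1 : ktr w p (c.1+c.2+1) = ktr w p (c.1+c.2) + _ := ktr.eq_2 _ _ _
            have r2 : ktr w p (c.1+c.2+1+1) = ktr w p (c.1+c.2+1) + _ := ktr.eq_2 _ _ _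
            have h1 := h p (c.1+c.2)
            have h2 := h p (c.1+c.2+1+1)
            simp only [ktM] at h1 h2
            rw [if_neg (by omega)] at h1 h2
            have := ktM_step S p L (c.1+c.2)
            have := ktM_step S p L (c.1+c.2+1)
            split_ifs at r1 r2 <;> omega
          · have := h p q
            simp only [ktM] at this
            rwa [if_neg (by tauto)] at this
      · left
        intro p q
        have := h p q
        simp only [ktM] at this
        rwa [if_neg (by tauto)] at this

theorem ktRed_M (S : Finset (ℕ × ℕ)) (p : ℕ) : ∀ (L : List (ℕ × ℕ)) (w : ℕ → ℕ), ktRed S L w →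
    ∀ q, ktr w p q ≤ ktM S p L q
  | [], w, h, q => by
    rw [ktRed] at h; rw [h, ktr_id, ktM]
  | c :: L, w, h, q => by
    rw [ktRed] at h
    rcases h with ⟨hc, hd, h⟩ | ⟨hc, h⟩
    · have ih := ktRed_M S p L _ h
      rw [ktM]
      split_ifs with g
      · obtain ⟨rfl, _⟩ := g
        have r1 : ktr w p (c.1+c.2+1) = ktr w p (c.1+c.2) + _ := ktr.eq_2 _ _ _
        have r2 : ktr w p (c.1+c.2+1+1) = ktr w p (c.1+c.2+1) + _ := ktr.eq_2 _ _ _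
        have h1 := ih (c.1+c.2)
        have h2 := ih (c.1+c.2+1+1)
        rw [ktr_sw_ne _ _ _ _ (by omega)] at h1 h2
        split_ifs at r1 r2 <;> omega
      · have := ih q
        rwa [ktr_sw_ne _ _ _ _ (fun e => g ⟨e, hc⟩)] at this
    · rw [ktM, if_neg (by tauto)]
      exact ktRed_M S p L w h q

theorem ktRed_Cont {S S' : Finset (ℕ × ℕ)} (hs : S' ⊆ S) : ∀ (L : List (ℕ × ℕ)) (w : ℕ → ℕ),
    ktRed S' L w → ktCont S L w
  | [], w, h => h
  | c :: L, w, h => by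
    rw [ktRed] at h
    rw [ktCont]
    rcases h with ⟨hc, hd, h⟩ | ⟨hc, h⟩
    · exact Or.inr ⟨hs hc, hd, ktRed_Cont hs L _ h⟩
    · exact Or.inl (ktRed_Cont hs L _ h)

theorem ktCont_Red (S : Finset (ℕ × ℕ)) : ∀ (L : List (ℕ × ℕ)), L.Nodup → ∀ (w : ℕ → ℕ),
    ktCont S L w → ∃ S', S' ⊆ S ∧ S' ⊆ L.toFinset ∧ ktRed S' L w
  | [], _, w, h => ⟨∅, by simp, by simp, h⟩
  | c :: L, hL, w, h => by
    rw [List.nodup_cons] at hL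
    rcases h with h | ⟨hc, hd, h⟩
    · obtain ⟨S', h1, h2, h3⟩ := ktCont_Red S L hL.2 w h
      refine ⟨S', h1, fun a ha => by have := h2 ha; simp at this ⊢; tauto, Or.inr ⟨fun h => hL.1 ?_, h3⟩⟩
      simpa using h2 h
    · obtain ⟨S', h1, h2, h3⟩ := ktCont_Red S L hL.2 _ h
      refine ⟨insert c S', ?_, ?_, Or.inl ⟨by simp, hd, ?_⟩⟩
      · intro a ha
        rcases Finset.mem_insert.1 ha with rfl | ha
        · exact hc
        · exact h1 ha
      · rw [List.toFinset_cons]; exact Finset.insert_subset_insert _ h2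
      · rw [ktRed_congr (S' := S')]
        · exact h3
        · intro c' hc'
          have : c' ≠ c := by rintro rfl; exact hL.1 hc'
          simp [this]

theorem ktRed_anti {S S' : Finset (ℕ × ℕ)} (hs : S' ⊆ S) : ∀ (L : List (ℕ × ℕ)) (w : ℕ → ℕ),
    Function.Injective w → ktRed S L w → ktRed S' L w → ∀ c ∈ L, c ∈ S → c ∈ S'
  | [], w, _, _, _ => by simp
  | c :: L, w, hw, h, h' => by
    rw [ktRed] at h h'
    rcases h with ⟨hc, hd, h⟩ | ⟨hc, h⟩
    · rcases h' with ⟨hc', _, h'⟩ | ⟨hc', h'⟩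
      · have ih := ktRed_anti hs L _ (ktsw_inj hw) h h'
        intro c' hm hS
        rcases List.mem_cons.1 hm with rfl | hm
        · exact hc'
        · exact ih c' hm hS
      · exfalso
        have h1 := (ktCont_iff S L w hw).1 (ktRed_Cont hs L w h')
        have h2 := ktRed_M S (w (c.1+c.2)) L _ h (c.1+c.2+1)
        have h3 := h1 (w (c.1+c.2)) (c.1+c.2+1)
        rw [ktr_sw_mid, if_pos hd] at h2
        rw [ktr, if_neg (by omega)] at h3
        omega
    · rcases h' with ⟨hc', _, h'⟩ | ⟨hc', h'⟩
      · exact absurd (hs hc') hc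
      · have ih := ktRed_anti hs L _ hw h h'
        intro c' hm hS
        rcases List.mem_cons.1 hm with rfl | hm
        · exact absurd hS hc
        · exact ih c' hm hS

theorem ktRed_low {S : Finset (ℕ × ℕ)} (k : ℕ) : ∀ (L : List (ℕ × ℕ)) (w : ℕ → ℕ),
    Function.Injective w → (∀ b < k, w b = b) → ktRed S L w → ∀ c ∈ L, c ∈ S → k ≤ c.1 + c.2
  | [], w, _, _, _ => by simp
  | c :: L, w, hw, hf, h => by
    rw [ktRed] at h
    rcases h with ⟨hc, hd, h⟩ | ⟨hc, h⟩
    · have hk : k ≤ c.1 + c.2 := by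
        by_contra hk
        have e := hf (c.1+c.2) (by omega)
        have e2 := hf (w (c.1+c.2+1)) (by omega)
        have e3 := hw e2
        omega
      have ih := ktRed_low k L _ (ktsw_inj hw)
        (fun b hb => by rw [ktsw_ne w (by omega) (by omega)]; exact hf b hb) h
      intro c' hm hS
      rcases List.mem_cons.1 hm with rfl | hm
      · exact hk
      · exact ih c' hm hS
    · have ih := ktRed_low k L _ hw hf h
      intro c' hm hS
      rcases List.mem_cons.1 hm with rfl | hm
      · exact absurd hS hc
      · exact ih c' hm hS

end ktWord

section ktChain

open Classical in
noncomputable def ktlc (S : Finset (ℕ × ℕ)) (p : ℕ) : ℕ → ℕ → ℕ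
  | 0, _ => 0
  | _+1, 0 => 0
  | i+1, d+1 => if (i, p - (d+1)) ∈ S then max (ktlc S p i (d+1)) (ktlc S p (i+1) d)
      else ktlc S p i d + 1

theorem ktlc_zero (S : Finset (ℕ × ℕ)) (p i : ℕ) : ktlc S p i 0 = 0 := by
  cases i <;> rw [ktlc]

theorem ktlc_zero' (S : Finset (ℕ × ℕ)) (p d : ℕ) : ktlc S p 0 d = 0 := by
  rw [ktlc]

theorem ktlc_diag {S : Finset (ℕ × ℕ)} {N : ℕ} (hS : ∀ c ∈ S, c.1 + c.2 + 2 ≤ N) (p : ℕ) :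
    ∀ d i, d ≤ i → d ≤ p → i + p = N + d → ktlc S p i d = d
  | 0, i, _, _, _ => ktlc_zero S p i
  | d+1, 0, h, _, _ => by omega
  | d+1, i+1, h1, h2, h3 => by
    rw [ktlc, if_neg, ktlc_diag hS p d i (by omega) (by omega) (by omega)]
    intro h
    have := hS _ h
    simp only at this
    omega

noncomputable def ktV (S : Finset (ℕ × ℕ)) (p i q : ℕ) : ℕ :=
  min (q - i) p + ktlc S p (min i q) (p - (q - i))

theorem ktV_top {S : Finset (ℕ × ℕ)} {N : ℕ} (hS : ∀ c ∈ S, c.1 + c.2 + 2 ≤ N) {p i : ℕ}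
    (hp : p ≤ N) (hi : i ≤ N) : ktV S p i N = p := by
  unfold ktV
  rw [min_eq_left hi]
  rcases Nat.lt_or_ge p (N - i) with h | h
  · rw [show p - (N - i) = 0 by omega, ktlc_zero]; omega
  · rw [ktlc_diag hS p (p - (N-i)) i (by omega) (by omega) (by omega)]; omega

theorem ktM_row {S : Finset (ℕ × ℕ)} {N : ℕ} {p i : ℕ}
    (L : List (ℕ × ℕ)) (hL : ∀ q ≤ N, ktM S p L q = ktV S p i q)
    (hV : ktV S p (i+1) N = ktV S p i N) :
    ∀ l j, i + j + l + 1 = N → ∀ q ≤ N,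
      ktM S p (ktRow i j l ++ L) q = if i + j + 1 ≤ q then ktV S p (i+1) q else ktV S p i q
  | 0, j, h, q, hq => by
    rw [ktRow, List.nil_append, hL q hq]
    split_ifs with g
    · rw [show q = N by omega, hV]
    · rfl
  | l+1, j, h, q, hq => by
    have ih := ktM_row L hL hV l (j+1) (by omega)
    rw [ktRow, List.cons_append, ktM]
    simp only
    rcases eq_or_ne q (i+j+1) with rfl | hne
    · rw [if_pos (le_refl (i+j+1))]
      have e1 : ktV S p (i+1) (i+j+1) = min j p + ktlc S p (i+1) (p - j) := by
        unfold ktV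
        rw [show i + j + 1 - (i+1) = j by omega, show min (i+1) (i+j+1) = i+1 by omega]
      have e2 : ktV S p i (i+j) = min j p + ktlc S p i (p - j) := by
        unfold ktV
        rw [show i + j - i = j by omega, show min i (i+j) = i by omega]
      have e3 : ktV S p (i+1) (i+j+1+1) = min (j+1) p + ktlc S p (i+1) (p - (j+1)) := by
        unfold ktV
        rw [show i + j + 1 + 1 - (i+1) = j+1 by omega, show min (i+1) (i+j+1+1) = i+1 by omega]
      have e4 : ktV S p i (i+j+1) = min (j+1) p + ktlc S p i (p - (j+1)) := by
        unfold ktV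
        rw [show i + j + 1 - i = j+1 by omega, show min i (i+j+1) = i by omega]
      have i1 := ih (i+j) (by omega)
      have i2 := ih (i+j+1+1) (by omega)
      have i3 := ih (i+j+1) (by omega)
      rw [if_neg (by omega)] at i1 i3
      rw [if_pos (by omega)] at i2
      rw [i1, i2, i3, e1, e2, e3, e4]
      rcases Nat.lt_or_ge j p with hj | hj
      · obtain ⟨d, hd⟩ : ∃ d, p - j = d + 1 := ⟨p - j - 1, by omega⟩
        rw [show p - (j+1) = d by omega, hd, ktlc, show p - (d+1) = j by omega]
        by_cases hc : (i,j) ∈ S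
        · rw [if_pos ⟨rfl, hc⟩, if_pos hc]; omega
        · rw [if_neg (fun h => hc h.2), if_neg hc]; omega
      · rw [show p - (j+1) = 0 by omega, show p - j = 0 by omega]
        simp only [ktlc_zero]
        split_ifs <;> omega
    · rw [if_neg (fun h => hne h.1), ih q hq]
      split_ifs <;> first | rfl | omega

theorem ktM_wd {S : Finset (ℕ × ℕ)} {N : ℕ} (hS : ∀ c ∈ S, c.1 + c.2 + 2 ≤ N) {p : ℕ}
    (hp : p ≤ N) : ∀ i, i + 1 ≤ N → ∀ q ≤ N, ktM S p (ktWd N i) q = ktV S p i q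
  | 0, _, q, _ => by
    rw [ktWd, ktM, ktV, Nat.zero_min, ktlc_zero', Nat.sub_zero]; omega
  | i+1, hi, q, hq => by
    rw [ktWd, ktM_row (ktWd N i) (ktM_wd hS hp i (by omega))
      (by rw [ktV_top hS hp (by omega), ktV_top hS hp (by omega)]) (N-1-i) 0 (by omega) q hq]
    split_ifs with h
    · rfl
    · unfold ktV
      rw [show q - i = 0 by omega, show q - (i+1) = 0 by omega, show min i q = q by omega,
        show min (i+1) q = q by omega]

theorem ktM_lc {S : Finset (ℕ × ℕ)} {N : ℕ} (hS : ∀ c ∈ S, c.1 + c.2 + 2 ≤ N) {p q : ℕ}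
    (hp : p ≤ N) (hq : q + 1 ≤ N) : ktM S p (ktWd N (N-1)) q = ktlc S p q p := by
  rw [ktM_wd hS hp (N-1) (by omega) q (by omega), ktV]
  rw [show q - (N-1) = 0 by omega, show min (N-1) q = q by omega]; simp

theorem ktw_inj {N k : ℕ} (hN : k + 1 ≤ N) : Function.Injective (ktw N k k) := by
  intro a b h
  unfold ktw at h
  split_ifs at h <;> omega

theorem ktr_w {N k p : ℕ} (hN : k + 1 ≤ N) : ∀ q, ktr (ktw N k k) p q =
    if p ≤ k ∨ N ≤ p then min p q else min q (max k (min q N + p - N))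
  | 0 => by rw [ktr]; split_ifs <;> omega
  | q+1 => by
    rw [ktr, ktr_w hN q]
    unfold ktw
    split_ifs <;> omega

def ktNC (N k : ℕ) (S : Finset (ℕ × ℕ)) : Prop :=
  ∀ p, k < p → p < N → ktlc S p (N + k - p) p ≤ k

theorem ktCont_NC {N k : ℕ} (hN : k + 1 ≤ N) {S : Finset (ℕ × ℕ)}
    (hS : ∀ c ∈ S, c.1 + c.2 + 2 ≤ N) :
    ktCont S (ktWd N (N-1)) (ktw N k k) ↔ ktNC N k S := by
  rw [ktCont_iff S _ _ (ktw_inj hN)]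
  constructor
  · intro h p h1 h2
    rw [← ktM_lc hS (by omega) (by omega)]
    have := h p (N+k-p)
    rw [ktr_w hN, if_neg (by omega)] at this
    omega
  · intro h p q
    rw [ktr_w hN]
    have h0 := ktM_le S p (ktWd N (N-1)) q
    split_ifs with g
    · exact h0
    · have h1 := h p (by omega) (by omega)
      rw [← ktM_lc hS (by omega) (by omega)] at h1
      rcases Nat.lt_or_ge q (N+k-p) with hq | hq
      · obtain ⟨t, ht⟩ : ∃ t, N + k - p = q + t := ⟨N+k-p-q, by omega⟩
        have := ktM_mono S p (ktWd N (N-1)) q t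
        rw [← ht] at this
        omega
      · obtain ⟨t, ht⟩ : ∃ t, q = (N + k - p) + t := ⟨q - (N+k-p), by omega⟩
        have := ktM_mono S p (ktWd N (N-1)) (N+k-p) t
        rw [← ht] at this
        omega

/-- chain of `t` cells outside `S` -/
def ktCh (S : Finset (ℕ × ℕ)) (p i d t : ℕ) (f : ℕ → ℕ × ℕ) : Prop :=
  (∀ a < t, f a ∉ S ∧ (f a).1 < i ∧ p ≤ (f a).2 + d ∧ (f a).2 < p) ∧
  ∀ a b, a < b → b < t → (f a).1 < (f b).1 ∧ (f b).2 < (f a).2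

theorem ktCh_mono {S : Finset (ℕ × ℕ)} {p i d i' d' t : ℕ} {f : ℕ → ℕ × ℕ} (h : ktCh S p i d t f)
    (hi : i ≤ i') (hd : d ≤ d') : ktCh S p i' d' t f :=
  ⟨fun a ha => by have := h.1 a ha; refine ⟨this.1, ?_⟩; omega, h.2⟩

theorem ktlc_ch (S : Finset (ℕ × ℕ)) (p : ℕ) : ∀ i d t, d ≤ p → t ≤ ktlc S p i d →
    ∃ f, ktCh S p i d t f
  | 0, d, t, _, ht => by
    rw [ktlc_zero'] at ht
    exact ⟨fun _ => 0, fun a ha => by omega, fun a b _ hb => by omega⟩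
  | i+1, 0, t, _, ht => by
    rw [ktlc_zero] at ht
    exact ⟨fun _ => 0, fun a ha => by omega, fun a b _ hb => by omega⟩
  | i+1, d+1, t, hd, ht => by
    rw [ktlc] at ht
    split_ifs at ht with hc
    · rcases le_max_iff.1 ht with h | h
      · obtain ⟨f, hf⟩ := ktlc_ch S p i (d+1) t hd h
        exact ⟨f, ktCh_mono hf (by omega) le_rfl⟩
      · obtain ⟨f, hf⟩ := ktlc_ch S p (i+1) d t (by omega) h
        exact ⟨f, ktCh_mono hf le_rfl (by omega)⟩
    · obtain ⟨f, hf⟩ := ktlc_ch S p i d (t-1) (by omega) (by omega)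
      refine ⟨fun a => if a = t - 1 then (i, p - (d+1)) else f a, fun a ha => ?_, fun a b hab hb => ?_⟩
      · simp only
        split_ifs with h
        · refine ⟨hc, ?_⟩; simp only; omega
        · have := hf.1 a (by omega)
          refine ⟨this.1, ?_⟩; omega
      · simp only
        rw [if_neg (by omega)]
        split_ifs with h
        · have := hf.1 a (by omega)
          simp only; omega
        · exact hf.2 a b hab (by omega)

theorem ktch_lc (S : Finset (ℕ × ℕ)) (p : ℕ) : ∀ i d t f, d ≤ p → ktCh S p i d t f →
    t ≤ ktlc S p i d
  | 0, d, t, f, _, h => by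
    by_contra hh
    have := h.1 0 (by omega)
    omega
  | i+1, 0, t, f, _, h => by
    by_contra hh
    have := h.1 0 (by omega)
    omega
  | i+1, d+1, 0, f, _, h => by omega
  | i+1, d+1, t+1, f, hd, h => by
    rw [ktlc]
    have hl := h.1 t (by omega)
    split_ifs with hc
    · have : (f t).1 ≠ i ∨ (f t).2 ≠ p - (d+1) := by
        by_contra hh
        push Not at hh
        apply hl.1
        rw [← hh.1, ← hh.2] at hc
        exact hc
      rcases this with h1 | h1
      · refine le_max_of_le_left (ktch_lc S p i (d+1) (t+1) f hd ⟨fun a ha => ?_, h.2⟩)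
        have h3 := h.1 a ha
        refine ⟨h3.1, ?_⟩
        rcases Nat.lt_or_ge a t with h2 | h2
        · have := h.2 a t h2 (by omega); omega
        · rw [show a = t by omega] at h3 ⊢; omega
      · refine le_max_of_le_right (ktch_lc S p (i+1) d (t+1) f (by omega) ⟨fun a ha => ?_, h.2⟩)
        have h3 := h.1 a ha
        refine ⟨h3.1, ?_⟩
        rcases Nat.lt_or_ge a t with h2 | h2
        · have := h.2 a t h2 (by omega); omega
        · rw [show a = t by omega] at h3 ⊢; omega
    · have := ktch_lc S p i d t f (by omega) ⟨fun a ha => ?_, fun a b hab hb => h.2 a b hab (by omega)⟩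
      · omega
      · have h3 := h.1 a (by omega)
        have := h.2 a t ha (by omega)
        refine ⟨h3.1, ?_⟩
        omega

theorem ktNC_iff {N k : ℕ} {S : Finset (ℕ × ℕ)} :
    ktNC N k S ↔ ∀ p, k < p → p < N → ¬ ∃ f, ktCh S p (N+k-p) p (k+1) f := by
  constructor
  · rintro h p h1 h2 ⟨f, hf⟩
    have := h p h1 h2
    have := ktch_lc S p _ p _ f le_rfl hf
    omega
  · intro h p h1 h2
    by_contra hh
    exact h p h1 h2 (ktlc_ch S p _ p (k+1) le_rfl (by omega))

end ktChain

section ktDiag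

theorem kt_si {t : ℕ} {h : ℕ → ℕ} (hs : ∀ a b, a < b → b < t → h a < h b) :
    ∀ s a, a + s < t → h a + s ≤ h (a + s)
  | 0, a, _ => by simp
  | s+1, a, hh => by
    have := kt_si hs s a (by omega)
    have := hs (a+s) (a+(s+1)) (by omega) hh
    omega

theorem kt_sd {t : ℕ} {h : ℕ → ℕ} (hs : ∀ a b, a < b → b < t → h b < h a) :
    ∀ s a, a + s < t → h (a + s) + s ≤ h a
  | 0, a, _ => by simp
  | s+1, a, hh => by
    have := kt_sd hs s a (by omega)
    have := hs (a+s) (a+(s+1)) (by omega) hh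
    omega

open Classical in
noncomputable def ktSD (n k N : ℕ) (D : Set (Fin n × Fin n)) : Finset (ℕ × ℕ) :=
  (ktWd N (N-1)).toFinset.filter (fun c => k ≤ c.1 + c.2 ∧
    ¬ ∃ p ∈ D, (p.1 : ℕ) = c.1 ∧ (p.2 : ℕ) + c.2 + 1 = n)

def ktTD (n : ℕ) (S : Finset (ℕ × ℕ)) : Set (Fin n × Fin n) :=
  {p | p.1 < p.2 ∧ 2 ≤ cdist n p.1 p.2 ∧ ((p.1 : ℕ), n - 1 - (p.2 : ℕ)) ∉ S}

open Classical in
theorem kt_mem_SD {n k N : ℕ} {D : Set (Fin n × Fin n)} {c : ℕ × ℕ} : c ∈ ktSD n k N D ↔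
    c.1 + c.2 + 2 ≤ N ∧ k ≤ c.1 + c.2 ∧
      ¬ ∃ p ∈ D, (p.1 : ℕ) = c.1 ∧ (p.2 : ℕ) + c.2 + 1 = n := by
  unfold ktSD
  rw [Finset.mem_filter, List.mem_toFinset, kt_mem_wd]
  constructor
  · rintro ⟨⟨_, h⟩, h2⟩; exact ⟨h, h2⟩
  · rintro ⟨h, h2⟩; exact ⟨⟨by omega, h⟩, h2⟩

theorem kt_cdist {n : ℕ} {a b : Fin n} (h : a < b) :
    cdist n a b = min ((b : ℕ) - a) (n - ((b : ℕ) - a)) := by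
  have : (a : ℕ) < b := h
  unfold cdist
  rw [max_eq_right this.le, min_eq_left this.le]

theorem kt_valid_NC {n k N : ℕ} (hn : N + k = n) {D : Set (Fin n × Fin n)}
    (h : ValidFam n k D) : ktNC N k (ktSD n k N D) := by
  rw [ktNC_iff]
  rintro p hp1 hp2 ⟨f, hf1, hf2⟩
  apply h.2
  have key : ∀ a : Fin (k+1), ∃ q ∈ D, (q.1 : ℕ) = (f a).1 ∧ (q.2 : ℕ) + (f a).2 + 1 = n := by
    intro a
    have ha := a.isLt
    have h1 := hf1 a ha
    have h0 := hf1 0 (by omega)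
    have hk := hf1 k (by omega)
    have i1 := kt_si (h := fun a => (f a).1) (fun a b hab hb => (hf2 a b hab hb).1) a 0 (by omega)
    have i2 := kt_si (h := fun a => (f a).1) (fun a b hab hb => (hf2 a b hab hb).1) (k-a) a (by omega)
    have i3 := kt_sd (h := fun a => (f a).2) (fun a b hab hb => (hf2 a b hab hb).2) a 0 (by omega)
    have i4 := kt_sd (h := fun a => (f a).2) (fun a b hab hb => (hf2 a b hab hb).2) (k-a) a (by omega)
    simp only [zero_add] at i1 i2 i3 i4
    rw [show (a:ℕ) + (k - a) = k by omega] at i2 i4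
    have h2 := h1.1
    rw [kt_mem_SD] at h2
    by_contra hh
    exact h2 ⟨by omega, by omega, hh⟩
  choose g hg using key
  have cr : ∀ a b : Fin (k+1), a < b → (g a).1 < (g b).1 ∧ (g b).1 < (g a).2 ∧ (g a).2 < (g b).2 := by
    intro a b hab
    have h1 := hg a
    have h2 := hg b
    have h3 := hf2 a b hab b.isLt
    have h4 := hf1 a a.isLt
    have h5 := hf1 b b.isLt
    simp only [Fin.lt_def]
    omega
  refine ⟨g, ?_, fun i => (hg i).1, ?_⟩
  · intro a b hab
    by_contra hne
    rcases lt_or_gt_of_ne hne with h1 | h1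
    · have := (cr _ _ h1).1
      rw [hab] at this
      exact lt_irrefl _ this
    · have := (cr _ _ h1).1
      rw [hab] at this
      exact lt_irrefl _ this
  · intro a b hne
    rcases lt_or_gt_of_ne hne with h1 | h1
    · exact Or.inl (cr _ _ h1)
    · exact Or.inr (cr _ _ h1)

theorem kt_NC_valid {n k N : ℕ} (hn : N + k = n) {S : Finset (ℕ × ℕ)}
    (h : ktNC N k S) : ValidFam n k (ktTD n S) := by
  refine ⟨fun p hp => ⟨hp.1, hp.2.1⟩, ?_⟩
  rintro ⟨f, hinj, hfD, hfc⟩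
  rw [ktNC_iff] at h
  let σ := Tuple.sort (fun i => (f i).1)
  have hσ : Monotone ((fun i => (f i).1) ∘ σ) := Tuple.monotone_sort _
  set g : Fin (k+1) → Fin n × Fin n := fun a => f (σ a) with hg
  have cr : ∀ a b : Fin (k+1), a < b →
      ((g a).1 : ℕ) < (g b).1 ∧ ((g b).1 : ℕ) < (g a).2 ∧ ((g a).2 : ℕ) < (g b).2 := by
    intro a b hab
    have h1 : (g a).1 ≤ (g b).1 := hσ hab.le
    have h2 := hfc (σ a) (σ b) (fun e => hab.ne (σ.injective e))
    rcases h2 with h2 | h2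
    · exact h2
    · exact absurd h2.1 (not_lt.2 h1)
  have gD : ∀ a, g a ∈ ktTD n S := fun a => hfD _
  let F : ℕ → ℕ × ℕ := fun a => if h : a < k + 1 then ((g ⟨a,h⟩).1, n - 1 - ((g ⟨a,h⟩).2 : ℕ)) else 0
  have hF1 : ∀ a (h : a < k+1), (F a).1 = (g ⟨a,h⟩).1 := fun a h => by simp only [F, dif_pos h]
  have hF2 : ∀ a (h : a < k+1), (F a).2 = n - 1 - ((g ⟨a,h⟩).2 : ℕ) := fun a h => by
    simp only [F, dif_pos h]
  have hF : ∀ a b, a < b → b < k+1 → (F a).1 < (F b).1 ∧ (F b).2 < (F a).2 := by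
    intro a b hab hb
    rw [hF1 a (by omega), hF1 b hb, hF2 a (by omega), hF2 b hb]
    have := cr ⟨a, by omega⟩ ⟨b, hb⟩ hab
    have := (g ⟨b,hb⟩).2.isLt
    omega
  have i1 := kt_si (h := fun a => (F a).1) (fun a b hab hb => (hF a b hab hb).1) k 0 (by omega)
  have i3 := kt_sd (h := fun a => (F a).2) (fun a b hab hb => (hF a b hab hb).2) k 0 (by omega)
  simp only [zero_add] at i1 i3
  have hk1 : (F k).1 < (g 0).2 := by
    rw [hF1 k (by omega)]
    rcases Nat.eq_zero_or_pos k with h0 | h0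
    · subst h0
      exact (gD 0).1
    · exact (cr 0 ⟨k, by omega⟩ h0).2.1
  have h00 := hF2 0 (by omega)
  change (F 0).2 = n - 1 - ((g 0).2 : ℕ) at h00
  have hlt := (g 0).2.isLt
  refine h (n - (g 0).2) (by omega) (by omega) ⟨F, fun a ha => ⟨?_, ?_, ?_, ?_⟩, hF⟩
  · have : F a = (((g ⟨a,ha⟩).1 : ℕ), n - 1 - ((g ⟨a,ha⟩).2 : ℕ)) := by
      rw [← hF1 a ha, ← hF2 a ha]
    rw [this]
    exact (gD _).2.2
  · rcases Nat.lt_or_ge a k with h1 | h1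
    · have := (hF a k h1 (by omega)).1
      omega
    · rw [show a = k by omega]; omega
  · omega
  · rcases Nat.eq_zero_or_pos a with h1 | h1
    · rw [h1]; omega
    · have := (hF 0 a h1 ha).2
      omega

theorem kt_SD_TD {n k N : ℕ} (hn : N + k = n) (hk : 1 ≤ k) {S : Finset (ℕ × ℕ)}
    (h1 : ∀ c ∈ S, c.1 + c.2 + 2 ≤ N) (h2 : ∀ c ∈ S, k ≤ c.1 + c.2) :
    ktSD n k N (ktTD n S) = S := by
  ext c
  rw [kt_mem_SD]
  constructor
  · rintro ⟨g1, g2, g3⟩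
    by_contra hc
    apply g3
    refine ⟨(⟨c.1, by omega⟩, ⟨n - 1 - c.2, by omega⟩), ⟨?_, ?_, ?_⟩, rfl, ?_⟩
    · simp only [Fin.lt_def]; omega
    · rw [kt_cdist (by simp only [Fin.lt_def]; omega)]; simp only; omega
    · simp only
      rwa [show n - 1 - (n - 1 - c.2) = c.2 by omega]
    · simp only; omega
  · intro hc
    refine ⟨h1 c hc, h2 c hc, ?_⟩
    rintro ⟨p, hp, e1, e2⟩
    apply hp.2.2
    rw [show n - 1 - (p.2 : ℕ) = c.2 by omega, e1]
    exact hc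

theorem kt_TD_SD {n k N : ℕ} {D : Set (Fin n × Fin n)} (h : ValidFam n k D) :
    D ⊆ ktTD n (ktSD n k N D) := by
  intro p hp
  refine ⟨(h.1 p hp).1, (h.1 p hp).2, fun hh => ?_⟩
  rw [kt_mem_SD] at hh
  apply hh.2.2
  refine ⟨p, hp, rfl, ?_⟩
  have := p.2.isLt
  simp only; omega

theorem kt_TD_anti {n : ℕ} {S S' : Finset (ℕ × ℕ)} (h : S' ⊆ S) : ktTD n S ⊆ ktTD n S' :=
  fun _ hp => ⟨hp.1, hp.2.1, fun hh => hp.2.2 (h hh)⟩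

theorem kt_SD_anti {n k N : ℕ} {D D' : Set (Fin n × Fin n)} (h : D ⊆ D') :
    ktSD n k N D' ⊆ ktSD n k N D := by
  intro c hc
  rw [kt_mem_SD] at hc ⊢
  exact ⟨hc.1, hc.2.1, fun ⟨p, hp, h2⟩ => hc.2.2 ⟨p, h hp, h2⟩⟩

/-- subwords which are reduced words -/
def ktOK (N k : ℕ) (S : Finset (ℕ × ℕ)) : Prop :=
  S ⊆ (ktWd N (N-1)).toFinset ∧ ktRed S (ktWd N (N-1)) (ktw N k k)

theorem ktOK_le {N k : ℕ} {S : Finset (ℕ × ℕ)} (h : ktOK N k S) : ∀ c ∈ S, c.1 + c.2 + 2 ≤ N := by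
  intro c hc
  have := h.1 hc
  rw [List.mem_toFinset, kt_mem_wd] at this
  exact this.2

theorem ktOK_ge {N k : ℕ} (hN : k + 1 ≤ N) {S : Finset (ℕ × ℕ)} (h : ktOK N k S) :
    ∀ c ∈ S, k ≤ c.1 + c.2 := by
  intro c hc
  refine ktRed_low k _ _ (ktw_inj hN) ?_ h.2 c ?_ hc
  · intro b hb; unfold ktw; rw [if_pos hb]
  · have := h.1 hc
    rwa [List.mem_toFinset] at this

theorem ktOK_valid {n N k : ℕ} (hn : N + k = n) (hN : k + 1 ≤ N) {S : Finset (ℕ × ℕ)}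
    (h : ktOK N k S) : ValidFam n k (ktTD n S) := by
  apply kt_NC_valid hn
  rw [← ktCont_NC hN (ktOK_le h)]
  exact ktRed_Cont (Finset.Subset.refl _) _ _ h.2

theorem kt_valid_OK {n N k : ℕ} (hn : N + k = n) (hN : k + 1 ≤ N) {D : Set (Fin n × Fin n)}
    (h : ValidFam n k D) : ∃ S, ktOK N k S ∧ S ⊆ ktSD n k N D := by
  have h1 := kt_valid_NC hn h
  rw [← ktCont_NC hN (fun c hc => (kt_mem_SD.1 hc).1)] at h1
  obtain ⟨S, h2, h3, h4⟩ := ktCont_Red _ _ (kt_nodup_wd N (N-1)) _ h1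
  exact ⟨S, ⟨h3, h4⟩, h2⟩

theorem kt_tri_iff {n N k : ℕ} (hn : N + k = n) (hN : k + 1 ≤ N) (hk : 1 ≤ k)
    (D : Set (Fin n × Fin n)) : IsKTri n k D ↔ ∃ S, ktOK N k S ∧ ktTD n S = D := by
  constructor
  · rintro ⟨hv, hmax⟩
    obtain ⟨S, hS, hsub⟩ := kt_valid_OK hn hN hv
    exact ⟨S, hS, hmax _ ((kt_TD_SD (N := N) hv).trans (kt_TD_anti hsub)) (ktOK_valid hn hN hS)⟩
  · rintro ⟨S, hS, rfl⟩
    refine ⟨ktOK_valid hn hN hS, fun D' hsub hv => ?_⟩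
    obtain ⟨S', hS', hsub'⟩ := kt_valid_OK hn hN hv
    have h1 : ktSD n k N D' ⊆ S := by
      have := kt_SD_anti (k := k) (N := N) hsub
      rwa [kt_SD_TD hn hk (ktOK_le hS) (ktOK_ge hN hS)] at this
    have h2 : S ⊆ S' := fun c hc =>
      ktRed_anti (hsub'.trans h1) _ _ (ktw_inj hN) hS.2 hS'.2 c
        (by have := hS.1 hc; rwa [List.mem_toFinset] at this) hc
    apply Set.Subset.antisymm _ hsub
    exact (kt_TD_SD (N := N) hv).trans (kt_TD_anti (h2.trans hsub'))

theorem kt_TD_inj {n N k : ℕ} (hn : N + k = n) (hN : k + 1 ≤ N) (hk : 1 ≤ k)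
    {S S' : Finset (ℕ × ℕ)} (h : ktOK N k S) (h' : ktOK N k S') (e : ktTD n S = ktTD n S') :
    S = S' := by
  rw [← kt_SD_TD hn hk (ktOK_le h) (ktOK_ge hN h), e, kt_SD_TD hn hk (ktOK_le h') (ktOK_ge hN h')]

open Classical in
theorem kt_triDeg {n N k : ℕ} (hn : N + k = n) (hN : k + 1 ≤ N) (hk : 1 ≤ k)
    {S : Finset (ℕ × ℕ)} (h : ktOK N k S) (v : Fin n) :
    triDeg n k (ktTD n S) v + (S.filter (fun c => c.1 = (v : ℕ))).card = (N - 1 - v) - (k - v) := by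
  have e1 : triDeg n k (ktTD n S) v =
      ((Finset.Ico (k - v) (N - 1 - v)).filter (fun j => ((v:ℕ), j) ∉ S)).card := by
    unfold triDeg
    rw [Nat.subtype_card (Finset.univ.filter (fun p : Fin n × Fin n =>
      p ∈ ktTD n S ∧ p.1 = v ∧ k < cdist n p.1 p.2)) (by simp)]
    apply Finset.card_bij (fun p _ => n - 1 - (p.2 : ℕ))
    · intro p hp
      obtain ⟨hp, hv, hc⟩ := (Finset.mem_filter.1 hp).2
      rw [kt_cdist hp.1] at hc
      rw [Finset.mem_filter, Finset.mem_Ico]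
      have h3 := hp.2.2
      have h1 : (p.1 : ℕ) < p.2 := hp.1
      have := p.2.isLt
      subst hv
      refine ⟨by omega, h3⟩
    · intro p hp q hq e
      have h1 := (Finset.mem_filter.1 hp).2.2.1
      have h2 := (Finset.mem_filter.1 hq).2.2.1
      have := p.2.isLt
      have := q.2.isLt
      apply Prod.ext
      · rw [h1, h2]
      · apply Fin.ext; omega
    · intro j hj
      rw [Finset.mem_filter, Finset.mem_Ico] at hj
      refine ⟨(v, ⟨n - 1 - j, by omega⟩), ?_, ?_⟩
      · have hlt : v < (⟨n - 1 - j, by omega⟩ : Fin n) := by simp only [Fin.lt_def]; omega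
        have hcd := kt_cdist hlt
        simp only at hcd
        rw [Finset.mem_filter]
        refine ⟨Finset.mem_univ _, ⟨hlt, ?_, ?_⟩, rfl, ?_⟩
        · simp only; omega
        · simp only
          rw [show n - 1 - (n - 1 - j) = j by omega]
          exact hj.2
        · simp only; omega
      · simp only; omega
  have e2 : (S.filter (fun c => c.1 = (v : ℕ))).card =
      ((Finset.Ico (k - v) (N - 1 - v)).filter (fun j => ((v:ℕ), j) ∈ S)).card := by
    apply Finset.card_bij (fun c _ => c.2)
    · intro c hc
      rw [Finset.mem_filter] at hc
      have h1 := ktOK_le h c hc.1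
      have h2 := ktOK_ge hN h c hc.1
      rw [Finset.mem_filter, Finset.mem_Ico]
      refine ⟨by omega, ?_⟩
      rw [← hc.2]; exact hc.1
    · intro c hc c' hc' e
      rw [Finset.mem_filter] at hc hc'
      exact Prod.ext (hc.2.trans hc'.2.symm) e
    · intro j hj
      rw [Finset.mem_filter] at hj
      exact ⟨(v, j), Finset.mem_filter.2 ⟨hj.2, rfl⟩, rfl⟩
  rw [e1, e2, add_comm, Finset.card_filter_add_card_filter_not, Nat.card_Ico]

end ktDiag

section ktFinal

theorem kt_extract {α β : Type*} (A : Finset α) (A' : Finset β) (N : ℕ) (e : α → ℕ → ℕ)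
    (e' : β → ℕ → ℕ)
    (h : ∀ (K : Type) [Field K] (x : ℕ → K), Function.Injective x →
      ∑ a ∈ A, ∏ i ∈ Finset.range N, x i ^ e a i = ∑ b ∈ A', ∏ i ∈ Finset.range N, x i ^ e' b i)
    (f : ℕ → ℕ) :
    (A.filter (fun a => ∀ i < N, e a i = f i)).card =
      (A'.filter (fun b => ∀ i < N, e' b i = f i)).card := by
  have hinj : Function.Injective
      (algebraMap (MvPolynomial ℕ ℤ) (FractionRing (MvPolynomial ℕ ℤ))) :=
    IsFractionRing.injective _ _
  have h1 := h (FractionRing (MvPolynomial ℕ ℤ)) (fun i => algebraMap _ _ (MvPolynomial.X i))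
    (hinj.comp (MvPolynomial.X_injective))
  simp only [← map_pow, ← map_prod, ← map_sum] at h1
  have h2 := hinj h1
  have mon : ∀ g : ℕ → ℕ, ∏ i ∈ Finset.range N, (MvPolynomial.X i : MvPolynomial ℕ ℤ) ^ g i =
      MvPolynomial.monomial (∑ i ∈ Finset.range N, Finsupp.single i (g i)) 1 := by
    intro g
    rw [MvPolynomial.monomial_sum_one]
    exact Finset.prod_congr rfl fun i _ => MvPolynomial.X_pow_eq_monomial
  have co : ∀ (g : ℕ → ℕ) (i : ℕ), i < N →
      (∑ i ∈ Finset.range N, Finsupp.single i (g i)) i = g i := by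
    intro g i hi
    rw [Finsupp.finset_sum_apply]
    simp only [Finsupp.single_apply]
    rw [Finset.sum_ite_eq' (Finset.range N) i, if_pos (Finset.mem_range.2 hi)]
  have eqv : ∀ g g' : ℕ → ℕ, (∑ i ∈ Finset.range N, Finsupp.single i (g i)) =
      (∑ i ∈ Finset.range N, Finsupp.single i (g' i)) ↔ ∀ i < N, g i = g' i := by
    intro g g'
    constructor
    · intro hh i hi
      rw [← co g i hi, hh, co g' i hi]
    · intro hh
      exact Finset.sum_congr rfl fun i hi => by rw [hh i (Finset.mem_range.1 hi)]
  have h3 := congrArg (MvPolynomial.coeff (∑ i ∈ Finset.range N, Finsupp.single i (f i))) h2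
  simp only [mon, MvPolynomial.coeff_sum, MvPolynomial.coeff_monomial, eqv] at h3
  rw [Finset.sum_boole, Finset.sum_boole] at h3
  exact_mod_cast h3

open Classical in
noncomputable def kteS (S : Finset (ℕ × ℕ)) (i : ℕ) : ℕ := (S.filter (fun c => c.1 = i)).card

noncomputable def kteP {m k : ℕ} (T B : Fin m → Fin (m+1))
    (P : Fin k → Fin m → Fin (m+1)) (i : ℕ) : ℕ :=
  if h : i < k + 1 then m - hstat T B P ⟨i, h⟩
  else if h : i - (k+1) < m - 1 then ustat T B P ⟨i - (k+1), h⟩ else 0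

theorem kteP_prod {K : Type*} [Field K] {m k : ℕ} (T B : Fin m → Fin (m+1)) (x : ℕ → K)
    (P : Fin k → Fin m → Fin (m+1)) :
    ktMP T B x P = ∏ i ∈ Finset.range (m+k+1), x i ^ kteP T B P i := by
  unfold ktMP
  have e1 : ∏ i : Fin (k+1), x i ^ (m - hstat T B P i) =
      ∏ i ∈ Finset.range (k+1), x i ^ kteP T B P i := by
    rw [Finset.prod_range]
    apply Finset.prod_congr rfl
    intro i _
    rw [kteP, dif_pos i.isLt]
  have e2 : ∏ s : Fin (m-1), x (k+1+s) ^ (ustat T B P s) =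
      ∏ s ∈ Finset.range (m-1), x (k+1+s) ^ kteP T B P (k+1+s) := by
    rw [Finset.prod_range]
    apply Finset.prod_congr rfl
    intro s _
    have : k + 1 + (s : ℕ) - (k+1) = s := by omega
    rw [kteP, dif_neg (by omega), dif_pos (by omega)]
    congr 2
    apply Fin.ext
    simp only; omega
  rw [e1, e2, ← Finset.prod_range_add (fun i => x i ^ kteP T B P i)]
  apply Finset.prod_subset
  · intro i hi
    rw [Finset.mem_range] at hi ⊢
    omega
  · intro i hi hi'
    rw [Finset.mem_range] at hi hi'
    rw [kteP, dif_neg (by omega), dif_neg (by omega), pow_zero]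

open Classical in
theorem kteS_prod {K : Type*} [Field K] {N k : ℕ} (x : ℕ → K) {S : Finset (ℕ × ℕ)}
    (h : ktOK N k S) : ∏ c ∈ S, x c.1 = ∏ i ∈ Finset.range N, x i ^ kteS S i := by
  rw [← Finset.prod_fiberwise_of_maps_to (s := S) (t := Finset.range N) (g := fun c => c.1)]
  · apply Finset.prod_congr rfl
    intro i _
    rw [kteS, ← Finset.prod_const]
    apply Finset.prod_congr rfl
    intro c hc
    rw [(Finset.mem_filter.1 hc).2]
  · intro c hc
    have := ktOK_le h c hc
    rw [Finset.mem_range]; omega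

open Classical in
theorem kt_count {m k : ℕ} (T B : Fin m → Fin (m+1)) (hT : ∀ j, (T j : ℕ) = m)
    (hB : ∀ j, (B j : ℕ) = (j : ℕ)) (f : ℕ → ℕ) :
    (((ktWd (m+k+1) (m+k+1-1)).toFinset.powerset.filter
        (fun S => ktRed S (ktWd (m+k+1) (m+k+1-1)) (ktw (m+k+1) k k))).filter
          (fun S => ∀ i < m+k+1, kteS S i = f i)).card =
    ((Finset.univ.filter (fun P : Fin k → Fin m → Fin (m+1) => InPk T B P)).filter
          (fun P => ∀ i < m+k+1, kteP T B P i = f i)).card := by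
  apply kt_extract
  intro K _ x hx
  have h1 := kt_fans (k := k) T B hT hB x
  rw [ktF_eq k m m le_rfl x hx, ← ktZ_R k m x hx, ktZ, ← ktOp_wd,
    kt_gf x _ (kt_nodup_wd _ _), ← Finset.sum_filter] at h1
  rw [← Finset.sum_congr rfl (fun P _ => kteP_prod T B x P), ← h1]
  apply Finset.sum_congr rfl
  intro S hS
  rw [Finset.mem_filter, Finset.mem_powerset] at hS
  exact (kteS_prod x (k := k) hS).symm

open Classical in
theorem kt_main (k m n : ℕ) (hk : 1 ≤ k) (hn : n = m + 2 * k + 1)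
    (T B : Fin m → Fin (m + 1))
    (hT : ∀ j, (T j : ℕ) = m) (hB : ∀ j, (B j : ℕ) = (j : ℕ))
    (d : Fin (n - k - 1) → ℕ) :
    Nat.card {D : Set (Fin n × Fin n) // IsKTri n k D ∧
        ∀ i : Fin (n - k - 1), triDeg n k D ⟨(i : ℕ), by have := i.isLt; omega⟩ = d i}
    = Nat.card {P : Fin k → Fin m → Fin (m + 1) //
        InPk T B P ∧
        (∀ (i : Fin (n - k - 1)) (hik : (i : ℕ) < k + 1),
          hstat T B P ⟨(i : ℕ), hik⟩ = d i) ∧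
        (∀ (i : Fin (n - k - 1)) (hik : k + 1 ≤ (i : ℕ)),
          ustat T B P ⟨(i : ℕ) - (k + 1), by have := i.isLt; omega⟩ + d i + k + ((i : ℕ) + 1) = n)} := by
  have hNn : (m+k+1) + k = n := by omega
  have hN : k + 1 ≤ m+k+1 := by omega
  have hst : ∀ (P : Fin k → Fin m → Fin (m+1)) i, hstat T B P i ≤ m := by
    intro P i
    unfold hstat
    have := Finite.card_subtype_le (α := Fin m)
      (fun j => extP T B P i.castSucc j = extP T B P i.succ j)
    simpa using this
  have tdeg : ∀ S, ktOK (m+k+1) k S → ∀ i : Fin (n-k-1),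
      triDeg n k (ktTD n S) ⟨(i : ℕ), by have := i.isLt; omega⟩ + kteS S i
        = (m + k - i) - (k - i) := by
    intro S hS i
    have := kt_triDeg hNn hN hk hS ⟨(i : ℕ), by have := i.isLt; omega⟩
    exact this
  by_cases hd : ∀ i : Fin (n-k-1), d i ≤ (m + k - i) - (k - i)
  · let f : ℕ → ℕ := fun i => if h : i < n - k - 1 then (m + k - i) - (k - i) - d ⟨i, h⟩ else 0
    have hc := kt_count (k := k) T B hT hB f
    have hf : ∀ i : Fin (n-k-1), f i = (m + k - i) - (k - i) - d i := by
      intro i; simp only [f, dif_pos i.isLt]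
    have L : Nat.card {D : Set (Fin n × Fin n) // IsKTri n k D ∧
        ∀ i : Fin (n - k - 1), triDeg n k D ⟨(i : ℕ), by have := i.isLt; omega⟩ = d i} =
        (((ktWd (m+k+1) (m+k+1-1)).toFinset.powerset.filter
        (fun S => ktRed S (ktWd (m+k+1) (m+k+1-1)) (ktw (m+k+1) k k))).filter
          (fun S => ∀ i < m+k+1, kteS S i = f i)).card := by
      rw [← Set.ncard_coe_finset, ← Set.ncard_image_of_injOn (f := ktTD n)]
      · change Set.ncard {D : Set (Fin n × Fin n) | IsKTri n k D ∧
          ∀ i : Fin (n - k - 1), triDeg n k D ⟨(i : ℕ), by have := i.isLt; omega⟩ = d i} = _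
        congr 1
        ext D
        simp only [Set.mem_setOf_eq, Set.mem_image, Finset.coe_filter, Finset.mem_filter,
          Finset.mem_powerset]
        rw [kt_tri_iff hNn hN hk]
        constructor
        · rintro ⟨⟨S, hS, rfl⟩, h2⟩
          refine ⟨S, ⟨hS, fun i hi => ?_⟩, rfl⟩
          by_cases hi' : i < n - k - 1
          · have h3 := tdeg S hS ⟨i, hi'⟩
            have h4 := h2 ⟨i, hi'⟩
            have h5 := hf ⟨i, hi'⟩
            simp only at h3 h4 h5
            omega
          · simp only [f, dif_neg hi']
            rw [kteS, Finset.card_eq_zero, Finset.filter_eq_empty_iff]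
            intro c hc
            have := ktOK_le hS c hc
            omega
        · rintro ⟨S, ⟨hS, h2⟩, rfl⟩
          refine ⟨⟨S, hS, rfl⟩, fun i => ?_⟩
          have h3 := tdeg S hS i
          have h4 := h2 i (by have := i.isLt; omega)
          have h5 := hf i
          have h6 := hd i
          omega
      · intro S hS S' hS' e
        simp only [Finset.coe_filter, Finset.mem_filter, Finset.mem_powerset,
          Set.mem_setOf_eq] at hS hS'
        exact kt_TD_inj hNn hN hk hS.1 hS'.1 e
    rw [L, hc]
    symm
    apply Nat.subtype_card
    intro P
    simp only [Finset.mem_filter, Finset.mem_univ, true_and]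
    apply and_congr_right
    intro _
    constructor
    · intro h
      constructor
      · intro i hik
        have h3 := h i (by have := i.isLt; omega)
        rw [hf, kteP, dif_pos hik] at h3
        have := hst P ⟨i, hik⟩
        have := hd i
        omega
      · intro i hik
        have h3 := h i (by have := i.isLt; omega)
        rw [hf, kteP, dif_neg (by omega), dif_pos (by have := i.isLt; omega)] at h3
        have := hd i
        have := i.isLt
        omega
    · rintro ⟨h1, h2⟩ i hi
      rw [kteP]
      by_cases hi' : i < n - k - 1
      · have h5 := hf ⟨i, hi'⟩
        simp only at h5
        rw [h5]
        split_ifs with g1 g2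
        · have := h1 ⟨i, hi'⟩ g1
          simp only at this
          omega
        · have := h2 ⟨i, hi'⟩ (by simp only; omega)
          simp only at this
          omega
        · omega
      · simp only [f, dif_neg hi']
        split_ifs with g1 g2
        · omega
        · omega
        · rfl
  · push Not at hd
    obtain ⟨i, hi⟩ := hd
    rw [Nat.card_eq_zero.2 (Or.inl ⟨?_⟩), Nat.card_eq_zero.2 (Or.inl ⟨?_⟩)]
    · rintro ⟨P, _, h1, h2⟩
      by_cases hik : (i : ℕ) < k + 1
      · have := h1 i hik
        have := hst P ⟨i, hik⟩
        omega
      · have := h2 i (by omega)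
        omega
    · rintro ⟨D, h1, h2⟩
      rw [kt_tri_iff hNn hN hk] at h1
      obtain ⟨S, hS, rfl⟩ := h1
      have := tdeg S hS i
      have := h2 i
      omega

end ktFinal

/-- Refinement of Nicolás' conjecture: `k`-triangulations of the convex `n`-gon
with degree sequence `(d_1, …, d_{n-k-1})` are equinumerous with `k`-fans of
Dyck paths with `h_{i-1} = d_i` for `1 ≤ i ≤ k+1` and
`u_{i-k-1} + d_i + k + i = n` for `k+1 < i ≤ n-k-1`. -/
theorem stmt17 (k n : ℕ) (hk : 1 ≤ k) (hn : 2*k + 1 ≤ n)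
    (T B : Fin (n - 2*k - 1) → Fin ((n - 2*k - 1) + 1))
    (hT : ∀ j, (T j : ℕ) = n - 2*k - 1) (hB : ∀ j, (B j : ℕ) = (j : ℕ))
    (d : Fin (n - k - 1) → ℕ) :
    Nat.card {D : Set (Fin n × Fin n) // IsKTri n k D ∧
        ∀ i : Fin (n - k - 1), triDeg n k D ⟨(i : ℕ), by have := i.isLt; omega⟩ = d i}
    = Nat.card {P : Fin k → Fin (n - 2*k - 1) → Fin ((n - 2*k - 1) + 1) //
        InPk T B P ∧
        (∀ (i : Fin (n - k - 1)) (hik : (i : ℕ) < k + 1),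
          hstat T B P ⟨(i : ℕ), hik⟩ = d i) ∧
        (∀ (i : Fin (n - k - 1)) (hik : k + 1 ≤ (i : ℕ)),
          ustat T B P ⟨(i : ℕ) - (k + 1), by have := i.isLt; omega⟩ + d i + k + ((i : ℕ) + 1) = n)} := by
  exact kt_main k (n - 2*k - 1) n hk (by omega) T B hT hB d
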